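/- (Theorem 2.2, Euler case.) Let n ≥ 1 and 1 < γ ≤ 1 + 2/n. Suppose M(0) ∈ (0,∞), ℙ(0) ≠ 0, F(0), G(0) are finite, IE(0) ∈ (0,∞), and the initial data satisfy IE(0)^{n(γ−1)/2} · IJ(0) / M(0)^{((n+2)γ−n)/2} < (Γ(n/2+1)/π^{n/2})^{γ−1} / (2^{((n+2)γ−n)/2}(γ−1)), where IJ(0) = G(0) − F(0) + IE(0). Then there exists a finite time T₂* > 0, determined by M(0), F(0), G(0), IE(0), γ and n, such that no classical solution of the isentropic compressible Euler equations with these initial physical quantities, satisfying the decay and integrability conditions, can exist on ℝⁿ × [0, T₂*]; in particular there is no such global-in-time solution. -/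

import Mathlib

open MeasureTheory Filter
open scoped InnerProductSpace

noncomputable section

/-- A classical solution of the isentropic compressible Euler equations
`∂ₜρ + div(ρu) = 0`, `∂ₜ(ρuᵢ) + div(ρuᵢu) + ∂ᵢ(ρ^γ) = 0` on `ℝⁿ × [0,T]`,
together with the decay conditions (9-25), the integrability conditions on the
physical quantities, and differentiability of these quantities with derivatives
computed by differentiating under the integral sign. -/
structure IsentropicEulerSolution (n : ℕ) (γ T : ℝ) where
  ρ : ℝ → EuclideanSpace ℝ (Fin n) → ℝ
  u : ℝ → EuclideanSpace ℝ (Fin n) → EuclideanSpace ℝ (Fin n)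
  ρ_nonneg : ∀ t ∈ Set.Icc 0 T, ∀ x, 0 ≤ ρ t x
  /-- `ρ` is `C¹` on `[0,T] × ℝⁿ`. -/
  smooth_ρ : ContDiffOn ℝ 1 (fun p : ℝ × EuclideanSpace ℝ (Fin n) => ρ p.1 p.2)
    (Set.Icc 0 T ×ˢ Set.univ)
  /-- `u` is `C¹` on `[0,T] × ℝⁿ`. -/
  smooth_u : ContDiffOn ℝ 1 (fun p : ℝ × EuclideanSpace ℝ (Fin n) => u p.1 p.2)
    (Set.Icc 0 T ×ˢ Set.univ)
  /-- Conservation of mass: `∂ₜρ + div(ρu) = 0`. -/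
  mass_eq : ∀ t ∈ Set.Icc 0 T, ∀ x,
    deriv (fun τ => ρ τ x) t
      + ∑ i : Fin n, fderiv ℝ (fun y => ρ t y * u t y i) x (EuclideanSpace.single i 1) = 0
  /-- Conservation of momentum: `∂ₜ(ρuᵢ) + div(ρuᵢu) + ∂ᵢ(ρ^γ) = 0`. -/
  momentum_eq : ∀ t ∈ Set.Icc 0 T, ∀ x, ∀ i : Fin n,
    deriv (fun τ => ρ τ x * u τ x i) t
      + ∑ j : Fin n, fderiv ℝ (fun y => ρ t y * u t y i * u t y j) x (EuclideanSpace.single j 1)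
      + fderiv ℝ (fun y => ρ t y ^ γ) x (EuclideanSpace.single i 1) = 0
  /-- decay: `|u| → 0` as `|x| → ∞`. -/
  decay_u : ∀ t ∈ Set.Icc 0 T,
    Tendsto (fun x => ‖u t x‖) (Bornology.cobounded _) (nhds 0)
  /-- decay: `ρ|u| = o(|x|^{-(n+1)})`. -/
  decay_ρu : ∀ t ∈ Set.Icc 0 T,
    Tendsto (fun x => ‖x‖ ^ (n + 1) * (ρ t x * ‖u t x‖)) (Bornology.cobounded _) (nhds 0)
  /-- decay: `|∇ₓu| = o(|x|^{-n})`. -/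
  decay_gradu : ∀ t ∈ Set.Icc 0 T,
    Tendsto (fun x => ‖x‖ ^ n * ‖fderiv ℝ (u t) x‖) (Bornology.cobounded _) (nhds 0)
  /-- decay: the pressure `ρ^γ = o(|x|^{-n})`. -/
  decay_p : ∀ t ∈ Set.Icc 0 T,
    Tendsto (fun x => ‖x‖ ^ n * ρ t x ^ γ) (Bornology.cobounded _) (nhds 0)
  int_ρ : ∀ t ∈ Set.Icc 0 T, Integrable (ρ t)
  int_ρu : ∀ t ∈ Set.Icc 0 T, Integrable (fun x => ρ t x * ‖u t x‖)
  int_ρu2 : ∀ t ∈ Set.Icc 0 T, Integrable (fun x => ρ t x * ‖u t x‖ ^ 2)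
  int_ρx2 : ∀ t ∈ Set.Icc 0 T, Integrable (fun x => ρ t x * ‖x‖ ^ 2)
  int_ρux : ∀ t ∈ Set.Icc 0 T, Integrable (fun x => ρ t x * ‖u t x‖ * ‖x‖)
  int_ργ : ∀ t ∈ Set.Icc 0 T, Integrable (fun x => ρ t x ^ γ)
  /-- `M(t) = ∫ρ` is differentiable, by differentiation under the integral sign. -/
  hM : ∀ t ∈ Set.Icc 0 T,
    HasDerivAt (fun τ => ∫ x, ρ τ x) (∫ x, deriv (fun τ => ρ τ x) t) t
  /-- `ℙ(t) = ∫ρu` is differentiable, by differentiation under the integral sign. -/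
  hP : ∀ t ∈ Set.Icc 0 T,
    HasDerivAt (fun τ => ∫ x, ρ τ x • u τ x) (∫ x, deriv (fun τ => ρ τ x • u τ x) t) t
  /-- `F(t) = ∫ρ u·x` is differentiable, by differentiation under the integral sign. -/
  hF : ∀ t ∈ Set.Icc 0 T,
    HasDerivAt (fun τ => ∫ x, ρ τ x * ⟪u τ x, x⟫_ℝ)
      (∫ x, deriv (fun τ => ρ τ x * ⟪u τ x, x⟫_ℝ) t) t
  /-- `G(t) = (1/2)∫ρ|x|²` is differentiable, by differentiation under the integral sign. -/
  hG : ∀ t ∈ Set.Icc 0 T,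
    HasDerivAt (fun τ => (1 / 2 : ℝ) * ∫ x, ρ τ x * ‖x‖ ^ 2)
      ((1 / 2 : ℝ) * ∫ x, deriv (fun τ => ρ τ x * ‖x‖ ^ 2) t) t
  /-- `IE(t) = E_k(t) + I(t)` is differentiable, by differentiation under the integral
  sign. -/
  hIE : ∀ t ∈ Set.Icc 0 T,
    HasDerivAt (fun τ => ∫ x, ((1 / 2 : ℝ) * ρ τ x * ‖u τ x‖ ^ 2 + ρ τ x ^ γ / (γ - 1)))
      (∫ x, deriv (fun τ => (1 / 2 : ℝ) * ρ τ x * ‖u τ x‖ ^ 2 + ρ τ x ^ γ / (γ - 1)) t) t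

namespace IsentropicEulerSolution

variable {n : ℕ} {γ T : ℝ}

/-- The mass `M(t) = ∫ ρ dx`. -/
def M (S : IsentropicEulerSolution n γ T) (t : ℝ) : ℝ := ∫ x, S.ρ t x

/-- The momentum `ℙ(t) = ∫ ρ u dx`. -/
def P (S : IsentropicEulerSolution n γ T) (t : ℝ) : EuclideanSpace ℝ (Fin n) :=
  ∫ x, S.ρ t x • S.u t x

/-- The momentum weight `F(t) = ∫ ρ u·x dx`. -/
def F (S : IsentropicEulerSolution n γ T) (t : ℝ) : ℝ := ∫ x, S.ρ t x * ⟪S.u t x, x⟫_ℝ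

/-- The momentum of inertia `G(t) = (1/2) ∫ ρ |x|² dx`. -/
def G (S : IsentropicEulerSolution n γ T) (t : ℝ) : ℝ := (1 / 2 : ℝ) * ∫ x, S.ρ t x * ‖x‖ ^ 2

/-- The kinetic energy `E_k(t) = (1/2) ∫ ρ |u|² dx`. -/
def Ek (S : IsentropicEulerSolution n γ T) (t : ℝ) : ℝ :=
  (1 / 2 : ℝ) * ∫ x, S.ρ t x * ‖S.u t x‖ ^ 2

/-- The potential energy `I(t) = (1/(γ−1)) ∫ ρ^γ dx`. -/
def I (S : IsentropicEulerSolution n γ T) (t : ℝ) : ℝ := (1 / (γ - 1)) * ∫ x, S.ρ t x ^ γ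

/-- The energy `IE(t) = E_k(t) + I(t)`. -/
def IE (S : IsentropicEulerSolution n γ T) (t : ℝ) : ℝ := S.Ek t + S.I t

/-- The functional `IJ(t) = G(t) − (t+1)F(t) + (t+1)² IE(t)`. -/
def IJ (S : IsentropicEulerSolution n γ T) (t : ℝ) : ℝ :=
  S.G t - (t + 1) * S.F t + (t + 1) ^ 2 * S.IE t

end IsentropicEulerSolution

/-- A Stirling-type upper bound for the Gamma function at positive half-integers. -/
lemma gamma_half_nat_le (n : ℕ) (hn : 1 ≤ n) :
    Real.Gamma ((n : ℝ) / 2 + 1) ≤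
      3 / 2 * (((n : ℝ) / 2) * ((n : ℝ) / 2 + 1) / (2 * ((n : ℝ) / 2) + 1)) ^ ((n : ℝ) / 2) := by
  have hpi : Real.pi < 3.15 := Real.pi_lt_d2
  have hpi0 : 0 < Real.pi := Real.pi_pos
  have hsqrt : Real.sqrt Real.pi ≤ 1.775 := by
    rw [Real.sqrt_le_left (by norm_num)]; norm_num; linarith
  induction n using Nat.strong_induction_on with
  | _ n ih =>
  rcases Nat.lt_or_ge n 4 with h4 | h4
  · interval_cases n
    · have e1 : ((1 : ℕ) : ℝ) / 2 = 1 / 2 := by norm_num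
      have e2 : (1 / 2 : ℝ) * (1 / 2 + 1) / (2 * (1 / 2) + 1) = 3 / 8 := by norm_num
      rw [e1, e2, Real.Gamma_add_one (by norm_num), Real.Gamma_one_half_eq, ← Real.sqrt_eq_rpow]
      have : (0.6 : ℝ) ≤ Real.sqrt (3 / 8) := Real.le_sqrt_of_sq_le (by norm_num)
      linarith
    · norm_num
    · have e1 : ((3 : ℕ) : ℝ) / 2 = 1 / 2 + 1 := by norm_num
      have e2 : (1 / 2 + 1 : ℝ) * (1 / 2 + 1 + 1) / (2 * (1 / 2 + 1) + 1) = 15 / 16 := by norm_num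
      rw [e1, e2, Real.Gamma_add_one (by norm_num), Real.Gamma_add_one (by norm_num),
        Real.Gamma_one_half_eq, Real.rpow_add (by norm_num), Real.rpow_one, ← Real.sqrt_eq_rpow]
      have : (0.965 : ℝ) ≤ Real.sqrt (15 / 16) := Real.le_sqrt_of_sq_le (by norm_num)
      linarith
  · obtain ⟨k, rfl⟩ : ∃ k, n = k + 2 := ⟨n - 2, by omega⟩
    have hk : 2 ≤ k := by omega
    have h := ih k (by omega) (by omega)
    have e : ((k + 2 : ℕ) : ℝ) / 2 = (k : ℝ) / 2 + 1 := by push_cast; ring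
    rw [e]
    have hm1 : (1 : ℝ) ≤ (k : ℝ) / 2 := by
      have : (2 : ℝ) ≤ k := by exact_mod_cast hk
      linarith
    set m : ℝ := (k : ℝ) / 2
    have hm0 : 0 < m := by linarith
    rw [Real.Gamma_add_one (by positivity)]
    set a : ℝ := m * (m + 1) / (2 * m + 1) with ha
    have ha0 : 0 < a := by positivity
    have hstep : (m + 1) * (m + 1 + 1) / (2 * (m + 1) + 1)
        = a * (1 + (2 * m + 2) / (m * (2 * m + 3))) := by
      rw [ha]; field_simp; ring
    have hb := one_add_mul_self_le_rpow_one_add (s := (2 * m + 2) / (m * (2 * m + 3)))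
      (by have : 0 ≤ (2 * m + 2) / (m * (2 * m + 3)) := by positivity
          linarith) hm1
    have hb' : (4 * m + 5) / (2 * m + 3) ≤ (1 + (2 * m + 2) / (m * (2 * m + 3))) ^ m := by
      refine le_trans (le_of_eq ?_) hb
      field_simp; ring
    have key : m + 1 ≤ (4 * m + 5) / (2 * m + 3) * ((m + 1) * (m + 1 + 1) / (2 * (m + 1) + 1)) := by
      have : 2 * (m + 1) + 1 = 2 * m + 3 := by ring
      rw [this, div_mul_div_comm, le_div_iff₀ (by positivity)]
      nlinarith [mul_pos hm0 hm0]
    have hq : 0 ≤ (m + 1) * (m + 1 + 1) / (2 * (m + 1) + 1) := by positivity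
    calc (m + 1) * Real.Gamma (m + 1)
        ≤ ((4 * m + 5) / (2 * m + 3) * ((m + 1) * (m + 1 + 1) / (2 * (m + 1) + 1)))
          * (3 / 2 * a ^ m) := by
            refine mul_le_mul key h ?_ (by positivity)
            exact (Real.Gamma_pos_of_pos (by positivity)).le
      _ ≤ ((1 + (2 * m + 2) / (m * (2 * m + 3))) ^ m
          * ((m + 1) * (m + 1 + 1) / (2 * (m + 1) + 1))) * (3 / 2 * a ^ m) := by gcongr
      _ = 3 / 2 * ((m + 1) * (m + 1 + 1) / (2 * (m + 1) + 1)) ^ (m + 1) := by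
            rw [hstep, Real.rpow_add (by positivity), Real.rpow_one,
              Real.mul_rpow ha0.le (by positivity)]
            ring

/-- The numerical inequality comparing the constants in the interpolation estimate. -/
lemma gamma_half_nat_le_rpow_mul_rpow (n : ℕ) (hn : 1 ≤ n) {b : ℝ} (hb : (n : ℝ) / 2 + 1 ≤ b) :
    Real.Gamma ((n : ℝ) / 2 + 1) ≤
      (2 * b / (b + n / 2)) ^ b * (b * (n / 2) / (b + n / 2)) ^ ((n : ℝ) / 2) := by
  refine (gamma_half_nat_le n hn).trans ?_
  have hm0 : 0 < (n : ℝ) / 2 := by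
    have : (1 : ℝ) ≤ n := by exact_mod_cast hn
    linarith
  set m : ℝ := (n : ℝ) / 2
  have hb0 : 0 < b := by linarith
  have h1 : 1 + 1 / (2 * m + 1) ≤ 2 * b / (b + m) := by
    rw [← sub_nonneg]
    have : 2 * b / (b + m) - (1 + 1 / (2 * m + 1))
        = 2 * m * (b - m - 1) / ((b + m) * (2 * m + 1)) := by field_simp; ring
    rw [this]
    have : 0 ≤ b - m - 1 := by linarith
    positivity
  have h2 : m * (m + 1) / (2 * m + 1) ≤ b * m / (b + m) := by
    rw [← sub_nonneg]
    have : b * m / (b + m) - m * (m + 1) / (2 * m + 1)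
        = m * m * (b - m - 1) / ((b + m) * (2 * m + 1)) := by field_simp; ring
    rw [this]
    have : 0 ≤ b - m - 1 := by linarith
    positivity
  have hpos : 0 ≤ 1 / (2 * m + 1) := by positivity
  have h3 : 3 / 2 ≤ (2 * b / (b + m)) ^ b := by
    have := one_add_mul_self_le_rpow_one_add (s := 1 / (2 * m + 1)) (by linarith)
      (p := m + 1) (by linarith)
    calc (3 / 2 : ℝ) ≤ 1 + (m + 1) * (1 / (2 * m + 1)) := by
          rw [← sub_nonneg]
          have : 1 + (m + 1) * (1 / (2 * m + 1)) - 3 / 2 = (1 / 2) / (2 * m + 1) := by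
            field_simp; ring
          rw [this]; positivity
      _ ≤ (1 + 1 / (2 * m + 1)) ^ (m + 1) := this
      _ ≤ (1 + 1 / (2 * m + 1)) ^ b := Real.rpow_le_rpow_of_exponent_le (by linarith) hb
      _ ≤ _ := Real.rpow_le_rpow (by linarith) h1 hb0.le
  exact mul_le_mul h3 (Real.rpow_le_rpow (by positivity) h2 hm0.le) (by positivity) (by positivity)

lemma integrable_rexp_neg_mul_sq_norm {V : Type*} [NormedAddCommGroup V] [InnerProductSpace ℝ V]
    [FiniteDimensional ℝ V] [MeasurableSpace V] [BorelSpace V] {b : ℝ} (hb : 0 < b) :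
    Integrable (fun v : V => Real.exp (-b * ‖v‖ ^ 2)) := by
  by_contra h
  have h0 := integral_undef h
  rw [GaussianFourier.integral_rexp_neg_mul_sq_norm hb] at h0
  have : 0 < (Real.pi / b) ^ ((Module.finrank ℝ V : ℝ) / 2) :=
    Real.rpow_pos_of_pos (div_pos Real.pi_pos hb) _
  linarith

/-- Hölder's inequality against a Gaussian weight. -/
lemma mass_sub_inertia_rpow_le {n : ℕ} {γ : ℝ} (hγ : 1 < γ) {ρ : EuclideanSpace ℝ (Fin n) → ℝ}
    (h0 : ∀ x, 0 ≤ ρ x) (h1 : Integrable ρ) (h2 : Integrable fun x => ρ x * ‖x‖ ^ 2)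
    (h3 : Integrable fun x => ρ x ^ γ) {a : ℝ} (ha : 0 < a)
    (hpos : 0 ≤ (∫ x, ρ x) - a * ∫ x, ρ x * ‖x‖ ^ 2) :
    ((∫ x, ρ x) - a * ∫ x, ρ x * ‖x‖ ^ 2) ^ γ ≤
      (∫ x, ρ x ^ γ) * (Real.pi / (γ / (γ - 1) * a)) ^ ((n : ℝ) / 2 * (γ - 1)) := by
  have hγ0 : 0 < γ := by linarith
  have hγ1 : 0 < γ - 1 := by linarith
  set q : ℝ := γ / (γ - 1) with hq
  have hq0 : 0 < q := by positivity
  have hpq : γ.HolderConjugate q := Real.HolderConjugate.conjExponent hγ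
  set g : EuclideanSpace ℝ (Fin n) → ℝ := fun x => Real.exp (-a * ‖x‖ ^ 2) with hg
  have hgq : ∀ x, g x ^ q = Real.exp (-(q * a) * ‖x‖ ^ 2) := by
    intro x
    rw [hg, ← Real.exp_mul]
    congr 1; ring
  have hg_cont : Continuous g := by fun_prop
  have hg_int : Integrable g := integrable_rexp_neg_mul_sq_norm ha
  have hgq_int : Integrable fun x => g x ^ q := by
    simp_rw [hgq]; exact integrable_rexp_neg_mul_sq_norm (by positivity)
  have hρL : MemLp ρ (ENNReal.ofReal γ) := by
    rw [← integrable_norm_rpow_iff h1.1 (by simpa using hγ0) (by simp),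
      ENNReal.toReal_ofReal hγ0.le]
    simpa [abs_of_nonneg (h0 _)] using h3
  have hgL : MemLp g (ENNReal.ofReal q) := by
    rw [← integrable_norm_rpow_iff hg_int.1 (by simpa using hq0) (by simp),
      ENNReal.toReal_ofReal hq0.le]
    simpa [hg] using hgq_int
  have hH := integral_mul_le_Lp_mul_Lq_of_nonneg hpq (μ := volume) (f := ρ) (g := g)
    (ae_of_all _ h0) (ae_of_all _ fun x => (Real.exp_pos _).le) hρL hgL
  have hρg : Integrable fun x => ρ x * g x := by
    refine h1.mul_bdd (c := 1) hg_cont.aestronglyMeasurable (ae_of_all _ fun x => ?_)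
    rw [Real.norm_eq_abs, Real.abs_exp, Real.exp_le_one_iff]
    nlinarith [sq_nonneg ‖x‖]
  have hlow : (∫ x, ρ x) - a * ∫ x, ρ x * ‖x‖ ^ 2 ≤ ∫ x, ρ x * g x := by
    rw [← integral_const_mul, ← integral_sub h1 (h2.const_mul a)]
    refine integral_mono (h1.sub (h2.const_mul a)) hρg fun x => ?_
    have := Real.add_one_le_exp (-a * ‖x‖ ^ 2)
    have := mul_le_mul_of_nonneg_left this (h0 x)
    simp only [hg]
    linarith
  have hI0 : 0 ≤ ∫ x, ρ x ^ γ := integral_nonneg fun x => Real.rpow_nonneg (h0 x) _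
  have hgauss : ∫ x, g x ^ q = (Real.pi / (q * a)) ^ ((n : ℝ) / 2) := by
    simp_rw [hgq]
    rw [GaussianFourier.integral_rexp_neg_mul_sq_norm (by positivity)]
    simp
  have hpi := Real.pi_pos
  calc ((∫ x, ρ x) - a * ∫ x, ρ x * ‖x‖ ^ 2) ^ γ
      ≤ ((∫ x, ρ x ^ γ) ^ (1 / γ) * (∫ x, g x ^ q) ^ (1 / q)) ^ γ :=
        Real.rpow_le_rpow hpos (hlow.trans hH) hγ0.le
    _ = _ := by
        rw [hgauss, Real.mul_rpow (by positivity) (by positivity), ← Real.rpow_mul hI0,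
          ← Real.rpow_mul (by positivity), ← Real.rpow_mul (by positivity)]
        congr 2
        · rw [one_div_mul_cancel hγ0.ne', Real.rpow_one]
        · rw [hq]; field_simp

/-- Interpolation: a lower bound for the pressure integral in terms of the mass and an upper bound
for the moment of inertia. -/
lemma mass_rpow_le_pressure_mul_inertia {n : ℕ} (hn : 1 ≤ n) {γ : ℝ} (hγ : 1 < γ)
    (hγn : γ ≤ 1 + 2 / n) {ρ : EuclideanSpace ℝ (Fin n) → ℝ}
    (h0 : ∀ x, 0 ≤ ρ x) (h1 : Integrable ρ) (h2 : Integrable fun x => ρ x * ‖x‖ ^ 2)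
    (h3 : Integrable fun x => ρ x ^ γ) (hM : 0 < ∫ x, ρ x) {Q : ℝ} (hQ : 0 < Q)
    (hGQ : (1 / 2 : ℝ) * ∫ x, ρ x * ‖x‖ ^ 2 ≤ Q) :
    (Real.Gamma ((n : ℝ) / 2 + 1) / Real.pi ^ ((n : ℝ) / 2)) ^ (γ - 1)
        / (2 : ℝ) ^ ((((n : ℝ) + 2) * γ - n) / 2) * (∫ x, ρ x) ^ ((((n : ℝ) + 2) * γ - n) / 2)
      ≤ (∫ x, ρ x ^ γ) * Q ^ ((n : ℝ) * (γ - 1) / 2) := by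
  have hγ1 : 0 < γ - 1 := by linarith
  have hn0 : (0 : ℝ) < n := by exact_mod_cast hn
  have hb : (n : ℝ) / 2 + 1 ≤ γ / (γ - 1) := by
    rw [le_div_iff₀ hγ1]
    have : (γ - 1) * n ≤ 2 := by
      rw [← le_div_iff₀ hn0]; linarith
    nlinarith
  have hΓ := gamma_half_nat_le_rpow_mul_rpow n hn hb
  have he1 : (((n : ℝ) + 2) * γ - n) / 2 = γ + (n : ℝ) / 2 * (γ - 1) := by ring
  have he2 : (n : ℝ) * (γ - 1) / 2 = (n : ℝ) / 2 * (γ - 1) := by ring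
  rw [he1, he2]
  have hm0 : 0 < (n : ℝ) / 2 := by positivity
  have hmain := fun a : ℝ => mass_sub_inertia_rpow_le (a := a) hγ h0 h1 h2 h3
  set m : ℝ := (n : ℝ) / 2
  set b : ℝ := γ / (γ - 1) with hbdef
  have hb0 : 0 < b := by linarith
  set M : ℝ := ∫ x, ρ x
  set A : ℝ := ∫ x, ρ x * ‖x‖ ^ 2
  set J : ℝ := ∫ x, ρ x ^ γ
  have hpi := Real.pi_pos
  have hθ : 0 < m / (b + m) := by positivity
  have hθ1 : 1 - m / (b + m) = b / (b + m) := by field_simp; ring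
  set a : ℝ := m / (b + m) * M / (2 * Q) with ha
  have ha0 : 0 < a := by positivity
  have haA : a * A ≤ m / (b + m) * M := by
    calc a * A ≤ a * (2 * Q) := by gcongr; linarith
      _ = _ := by rw [ha]; field_simp
  have hlow : b / (b + m) * M ≤ M - a * A := by rw [← hθ1]; linarith
  have hlow0 : 0 < b / (b + m) * M := by positivity
  have hm2 := hmain a ha0 (hlow0.le.trans hlow)
  have hm3 : (b / (b + m) * M) ^ γ ≤ J * (Real.pi / (b * a)) ^ (m * (γ - 1)) :=
    (Real.rpow_le_rpow hlow0.le hlow (by linarith)).trans hm2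
  have hγb : γ = b * (γ - 1) := by rw [hbdef]; field_simp
  have hΓ0 : 0 < Real.Gamma (m + 1) := Real.Gamma_pos_of_pos (by positivity)
  have hΓ2 : Real.Gamma (m + 1) ^ (γ - 1) ≤
      (2 * b / (b + m)) ^ γ * (b * m / (b + m)) ^ (m * (γ - 1)) := by
    calc _ ≤ ((2 * b / (b + m)) ^ b * (b * m / (b + m)) ^ m) ^ (γ - 1) :=
          Real.rpow_le_rpow hΓ0.le hΓ hγ1.le
      _ = _ := by
          rw [Real.mul_rpow (by positivity) (by positivity), ← Real.rpow_mul (by positivity),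
            ← Real.rpow_mul (by positivity), ← hγb]
  have hk : (Real.pi / (b * a)) ^ (m * (γ - 1)) * (b * a / (Real.pi * Q⁻¹)) ^ (m * (γ - 1))
      = Q ^ (m * (γ - 1)) := by
    rw [← Real.mul_rpow (by positivity) (by positivity)]
    congr 1; field_simp
  have hba : b * a / (Real.pi * Q⁻¹) = (b * m / (b + m)) * M / (2 * Real.pi) := by
    rw [ha]; field_simp
  calc _ ≤ ((2 * b / (b + m)) ^ γ * (b * m / (b + m)) ^ (m * (γ - 1)))
        / (Real.pi ^ (m * (γ - 1))) / 2 ^ (γ + m * (γ - 1)) * M ^ (γ + m * (γ - 1)) := by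
        rw [Real.div_rpow hΓ0.le (by positivity), ← Real.rpow_mul hpi.le]
        gcongr
    _ = (b / (b + m) * M) ^ γ * (b * a / (Real.pi * Q⁻¹)) ^ (m * (γ - 1)) := by
        rw [hba, show 2 * b / (b + m) = 2 * (b / (b + m)) by ring,
          Real.mul_rpow (by norm_num) (by positivity), Real.mul_rpow (by positivity) hM.le,
          Real.rpow_add (by norm_num), Real.rpow_add hM,
          Real.div_rpow (x := b * m / (b + m) * M) (by positivity) (by positivity),
          Real.mul_rpow (x := b * m / (b + m)) (by positivity) hM.le,
          Real.mul_rpow (x := 2) (by norm_num) hpi.le]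
        have : (2 : ℝ) ^ γ ≠ 0 := by positivity
        field_simp
    _ ≤ J * (Real.pi / (b * a)) ^ (m * (γ - 1)) * (b * a / (Real.pi * Q⁻¹)) ^ (m * (γ - 1)) := by
        gcongr
    _ = _ := by rw [mul_assoc, hk]

/-- If a sequence of functions and their uniformly bounded derivatives converge pointwise, and the
limit of the derivatives is nonpositive, then the limit function does not increase. -/
lemma le_of_tendsto_of_hasDerivAt_of_nonpos {t : ℝ} (ht : 0 ≤ t) {f f' : ℕ → ℝ → ℝ} {g : ℝ → ℝ}
    {a b C : ℝ} (hc : ∀ N, ContinuousOn (f N) (Set.Icc 0 t))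
    (hd : ∀ N, ∀ s ∈ Set.Ioo 0 t, HasDerivAt (f N) (f' N s) s)
    (hC : ∀ N, ∀ s ∈ Set.Ioo 0 t, |f' N s| ≤ C)
    (ha : Tendsto (fun N => f N 0) atTop (nhds a)) (hb : Tendsto (fun N => f N t) atTop (nhds b))
    (hg : ∀ s ∈ Set.Ioo 0 t, Tendsto (fun N => f' N s) atTop (nhds (g s)))
    (hg0 : ∀ s ∈ Set.Ioo 0 t, g s ≤ 0) : b ≤ a := by
  have hae : ∀ᵐ s : ℝ, s ∈ Set.uIoc 0 t → s ∈ Set.Ioo 0 t := by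
    have : ∀ᵐ s : ℝ, s ≠ t := by simp [ae_iff]
    filter_upwards [this] with s hs hs'
    rw [Set.uIoc_of_le ht] at hs'
    exact ⟨hs'.1, lt_of_le_of_ne hs'.2 hs⟩
  have hmeas : ∀ N, AEStronglyMeasurable (f' N) (volume.restrict (Set.uIoc 0 t)) := by
    intro N
    refine (measurable_deriv (f N)).aestronglyMeasurable.congr ?_
    rw [EventuallyEq, ae_restrict_iff' measurableSet_uIoc]
    filter_upwards [hae] with s hs hs'
    exact (hd N s (hs hs')).deriv
  have hbd : ∀ N, ∀ᵐ s : ℝ, s ∈ Set.uIoc 0 t → ‖f' N s‖ ≤ C := by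
    intro N
    filter_upwards [hae] with s hs hs'
    exact hC N s (hs hs')
  have hint : ∀ N, IntervalIntegrable (f' N) volume 0 t := by
    intro N
    refine (intervalIntegrable_const (c := C)).mono_fun (hmeas N) ?_
    rw [EventuallyLE, ae_restrict_iff' measurableSet_uIoc]
    filter_upwards [hbd N] with s hs hs'
    exact (hs hs').trans (le_abs_self C)
  have hlim := intervalIntegral.tendsto_integral_filter_of_dominated_convergence (μ := volume)
    (a := 0) (b := t) (F := f') (f := g) (l := atTop) (fun _ => C) (Eventually.of_forall hmeas)
    (Eventually.of_forall hbd) intervalIntegrable_const (by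
      filter_upwards [hae] with s hs hs'
      exact hg s (hs hs'))
  have heq : ∀ N, ∫ s in (0 : ℝ)..t, f' N s = f N t - f N 0 := fun N =>
    intervalIntegral.integral_eq_sub_of_hasDerivAt_of_le ht (hc N) (hd N) (hint N)
  simp_rw [heq] at hlim
  have hval := tendsto_nhds_unique hlim (hb.sub ha)
  have hneg : ∫ s in (0 : ℝ)..t, g s ≤ 0 := by
    rw [intervalIntegral.integral_of_le ht]
    refine integral_nonpos_of_ae ?_
    rw [EventuallyLE, ae_restrict_iff' measurableSet_Ioc]
    filter_upwards [hae] with s hs hs'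
    exact hg0 s (hs (by rwa [Set.uIoc_of_le ht]))
  linarith

/-- Growth of the moment of inertia `G` and decay of the potential energy `I`, when the relations
`G' = F` and `F' = 2E - (2 - 2k) I` hold in the limit of smooth truncations. -/
lemma inertia_le_and_potential_le {T k E C : ℝ} (hk1 : k ≤ 1)
    {Gs Fs gs fs : ℕ → ℝ → ℝ} {G F I : ℝ → ℝ}
    (hGc : ∀ N, ContinuousOn (Gs N) (Set.Icc 0 T)) (hFc : ∀ N, ContinuousOn (Fs N) (Set.Icc 0 T))
    (hGd : ∀ N, ∀ s ∈ Set.Ioo 0 T, HasDerivAt (Gs N) (gs N s) s)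
    (hFd : ∀ N, ∀ s ∈ Set.Ioo 0 T, HasDerivAt (Fs N) (fs N s) s)
    (hGb : ∀ N, ∀ s ∈ Set.Ioo 0 T, |Gs N s| ≤ C) (hFb : ∀ N, ∀ s ∈ Set.Ioo 0 T, |Fs N s| ≤ C)
    (hgb : ∀ N, ∀ s ∈ Set.Ioo 0 T, |gs N s| ≤ C) (hfb : ∀ N, ∀ s ∈ Set.Ioo 0 T, |fs N s| ≤ C)
    (hGl : ∀ s ∈ Set.Icc 0 T, Tendsto (fun N => Gs N s) atTop (nhds (G s)))
    (hFl : ∀ s ∈ Set.Icc 0 T, Tendsto (fun N => Fs N s) atTop (nhds (F s)))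
    (hgl : ∀ s ∈ Set.Ioo 0 T, Tendsto (fun N => gs N s) atTop (nhds (F s)))
    (hfl : ∀ s ∈ Set.Ioo 0 T,
      Tendsto (fun N => fs N s) atTop (nhds (2 * E - (2 - 2 * k) * I s)))
    (hI : ∀ s ∈ Set.Icc 0 T, 0 ≤ I s)
    (hIJ : ∀ s ∈ Set.Icc 0 T, (s + 1) ^ 2 * I s ≤ G s - (s + 1) * F s + (s + 1) ^ 2 * E)
    {t : ℝ} (ht : t ∈ Set.Icc 0 T) :
    G t ≤ G 0 + F 0 * t + E * t ^ 2 ∧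
      I t * (t + 1) ^ (2 * k) ≤ G 0 - F 0 + E := by
  have hsub : ∀ t ∈ Set.Icc 0 T, Set.Ioo 0 t ⊆ Set.Ioo 0 T := fun t ht =>
    Set.Ioo_subset_Ioo_right ht.2
  have hsubc : ∀ t ∈ Set.Icc 0 T, Set.Icc 0 t ⊆ Set.Icc 0 T := fun t ht =>
    Set.Icc_subset_Icc_right ht.2
  have h0T : ∀ t ∈ Set.Icc 0 T, (0 : ℝ) ∈ Set.Icc 0 T := fun t ht => ⟨le_rfl, ht.1.trans ht.2⟩
  have hF : ∀ t ∈ Set.Icc 0 T, F t ≤ F 0 + 2 * E * t := by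
    intro t ht
    have := le_of_tendsto_of_hasDerivAt_of_nonpos (t := t) ht.1
      (f := fun N s => Fs N s - 2 * E * s) (f' := fun N s => fs N s - 2 * E * 1)
      (g := fun s => 2 * E - (2 - 2 * k) * I s - 2 * E * 1) (C := C + |2 * E * 1|)
      (fun N => ((hFc N).mono (hsubc t ht)).sub (by fun_prop))
      (fun N s hs => (hFd N s (hsub t ht hs)).sub ((hasDerivAt_id s).const_mul (2 * E)))
      (fun N s hs => (abs_sub _ _).trans (by gcongr; exact hfb N s (hsub t ht hs)))
      ((hFl 0 (h0T t ht)).sub_const _) ((hFl t ht).sub_const _)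
      (fun s hs => (hfl s (hsub t ht hs)).sub_const _)
      (fun s hs => by
        have := hI s (Set.Ioo_subset_Icc_self (hsub t ht hs))
        nlinarith)
    linarith
  refine ⟨?_, ?_⟩
  · have := le_of_tendsto_of_hasDerivAt_of_nonpos (t := t) ht.1
      (f := fun N s => Gs N s - (F 0 * s + E * s ^ 2))
      (f' := fun N s => gs N s - (F 0 * 1 + E * (2 * s)))
      (g := fun s => F s - (F 0 * 1 + E * (2 * s))) (C := C + (|F 0| + |E| * (2 * T)))
      (fun N => ((hGc N).mono (hsubc t ht)).sub (by fun_prop))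
      (fun N s hs => (hGd N s (hsub t ht hs)).sub (((hasDerivAt_id s).const_mul (F 0)).add
        (by simpa using (hasDerivAt_pow 2 s).const_mul E)))
      (fun N s hs => by
        have hs' := hsub t ht hs
        refine (abs_sub _ _).trans (add_le_add (hgb N s hs') ((abs_add_le _ _).trans ?_))
        rw [mul_one, abs_mul E, abs_of_pos (by linarith [hs'.1] : 0 < 2 * s)]
        gcongr
        exact hs'.2.le)
      ((hGl 0 (h0T t ht)).sub_const _) ((hGl t ht).sub_const _)
      (fun s hs => (hgl s (hsub t ht hs)).sub_const _)
      (fun s hs => by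
        have := hF s (Set.Ioo_subset_Icc_self (hsub t ht hs))
        linarith)
    linarith
  · have hr0 : ∀ s ∈ Set.Icc 0 T, ∀ p : ℝ, p ≤ 0 → (s + 1) ^ p ≤ 1 := fun s hs p hp =>
      Real.rpow_le_one_of_one_le_of_nonpos (by linarith [hs.1]) hp
    set B : ℝ := C + (T + 1) * C + (T + 1) ^ 2 * |E| with hB
    set B' : ℝ := C + (C + (T + 1) * C) + 2 * (T + 1) * |E| with hB'
    have := le_of_tendsto_of_hasDerivAt_of_nonpos (t := t) ht.1
      (f := fun N s => (s + 1) ^ (2 * k - 2) * (Gs N s - (s + 1) * Fs N s + (s + 1) ^ 2 * E))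
      (f' := fun N s => (1 * (2 * k - 2) * (s + 1) ^ (2 * k - 2 - 1))
        * (Gs N s - (s + 1) * Fs N s + (s + 1) ^ 2 * E)
        + (s + 1) ^ (2 * k - 2) * (gs N s - (1 * Fs N s + (s + 1) * fs N s) + 2 * (s + 1) * E))
      (g := fun s => (1 * (2 * k - 2) * (s + 1) ^ (2 * k - 2 - 1))
        * (G s - (s + 1) * F s + (s + 1) ^ 2 * E)
        + (s + 1) ^ (2 * k - 2) * (F s - (1 * F s + (s + 1) * (2 * E - (2 - 2 * k) * I s))
          + 2 * (s + 1) * E))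
      (C := |2 * k - 2| * B + B')
      (a := ((0 : ℝ) + 1) ^ (2 * k - 2) * (G 0 - (0 + 1) * F 0 + (0 + 1) ^ 2 * E))
      (b := (t + 1) ^ (2 * k - 2) * (G t - (t + 1) * F t + (t + 1) ^ 2 * E))
      (fun N => by
        have h1 := (hGc N).mono (hsubc t ht)
        have h2 := (hFc N).mono (hsubc t ht)
        refine ContinuousOn.mul ?_ ((h1.sub ((by fun_prop : ContinuousOn (fun s : ℝ => s + 1)
          (Set.Icc 0 t)).mul h2)).add (by fun_prop))
        exact ContinuousOn.rpow_const (by fun_prop) fun s hs =>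
          Or.inl (by linarith [hs.1] : (0 : ℝ) < s + 1).ne')
      (fun N s hs => by
        have hs' := hsub t ht hs
        have hs1 : HasDerivAt (fun s : ℝ => s + 1) 1 s := (hasDerivAt_id s).add_const 1
        have hsq : HasDerivAt (fun s : ℝ => (s + 1) ^ 2 * E) (2 * (s + 1) * E) s := by
          simpa using (hs1.pow 2).mul_const E
        refine (hs1.rpow_const (Or.inl (by linarith [hs.1] : (0 : ℝ) < s + 1).ne')).mul ?_
        exact ((hGd N s hs').sub (hs1.mul (hFd N s hs'))).add hsq)
      (fun N s hs => by
        have hs' := hsub t ht hs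
        have hsT := Set.Ioo_subset_Icc_self hs'
        have hs0 : 0 < s + 1 := by linarith [hs.1]
        have hsT1 : s + 1 ≤ T + 1 := by linarith [hs'.2]
        have hT1 : 0 ≤ T + 1 := hs0.le.trans hsT1
        have hC0 : 0 ≤ C := (abs_nonneg _).trans (hGb N s hs')
        have b1 : |Gs N s - (s + 1) * Fs N s + (s + 1) ^ 2 * E| ≤ B := by
          refine (abs_add_le _ _).trans (add_le_add ((abs_sub _ _).trans
            (add_le_add (hGb N s hs') ?_)) ?_)
          · rw [abs_mul, abs_of_pos hs0]
            exact mul_le_mul hsT1 (hFb N s hs') (abs_nonneg _) hT1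
          · rw [abs_mul, abs_of_pos (by positivity : 0 < (s + 1) ^ 2)]
            gcongr
        have b2 : |gs N s - (1 * Fs N s + (s + 1) * fs N s) + 2 * (s + 1) * E| ≤ B' := by
          refine (abs_add_le _ _).trans (add_le_add ((abs_sub _ _).trans
            (add_le_add (hgb N s hs') ((abs_add_le _ _).trans (add_le_add ?_ ?_)))) ?_)
          · rw [one_mul]; exact hFb N s hs'
          · rw [abs_mul, abs_of_pos hs0]
            exact mul_le_mul hsT1 (hfb N s hs') (abs_nonneg _) hT1
          · rw [abs_mul, abs_of_pos (by positivity : 0 < 2 * (s + 1))]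
            gcongr
        refine (abs_add_le _ _).trans (add_le_add ?_ ?_)
        · rw [abs_mul]
          refine mul_le_mul ?_ b1 (abs_nonneg _) (abs_nonneg _)
          rw [one_mul, abs_mul, abs_of_pos (Real.rpow_pos_of_pos hs0 _)]
          exact mul_le_of_le_one_right (abs_nonneg _) (hr0 s hsT _ (by linarith))
        · rw [abs_mul, abs_of_pos (Real.rpow_pos_of_pos hs0 _)]
          exact (mul_le_of_le_one_left (abs_nonneg _) (hr0 s hsT _ (by linarith))).trans b2)
      (((hGl 0 (h0T t ht)).sub ((hFl 0 (h0T t ht)).const_mul _)).add_const _ |>.const_mul _)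
      (((hGl t ht).sub ((hFl t ht).const_mul _)).add_const _ |>.const_mul _)
      (fun s hs => by
        have hs' := hsub t ht hs
        have hsT := Set.Ioo_subset_Icc_self hs'
        refine ((((hGl s hsT).sub ((hFl s hsT).const_mul _)).add_const _).const_mul _).add
          ((((hgl s hs').sub (((hFl s hsT).const_mul _).add
            ((hfl s hs').const_mul _))).add_const _).const_mul _))
      (fun s hs => by
        have hs' := hsub t ht hs
        have hsT := Set.Ioo_subset_Icc_self hs'
        have hs0 : 0 < s + 1 := by linarith [hs.1]
        have e : (s + 1) ^ (2 * k - 2) = (s + 1) ^ (2 * k - 2 - 1) * (s + 1) := by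
          conv_rhs => rw [← Real.rpow_add_one hs0.ne']
          congr 1; ring
        rw [e]
        have hp : 0 < (s + 1) ^ (2 * k - 2 - 1) := Real.rpow_pos_of_pos hs0 _
        have h1 : 0 ≤ (2 - 2 * k) * (G s - (s + 1) * F s + (s + 1) ^ 2 * E - (s + 1) ^ 2 * I s) :=
          mul_nonneg (by linarith) (sub_nonneg.2 (hIJ s hsT))
        have h2 := mul_nonneg hp.le h1
        nlinarith)
    have ht0 : 0 < t + 1 := by linarith [ht.1]
    have e : (t + 1) ^ (2 * k) = (t + 1) ^ (2 * k - 2) * (t + 1) ^ 2 := by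
      rw [← Real.rpow_natCast, ← Real.rpow_add ht0]
      congr 1; push_cast; ring
    have h3 := mul_le_mul_of_nonneg_left (hIJ t ht) (Real.rpow_pos_of_pos ht0 (2 * k - 2)).le
    rw [zero_add, Real.one_rpow] at this
    rw [e]
    linarith

/-- A sequence of smooth compactly supported cutoff functions exhausting the space, with scale
invariant gradient bounds. -/
structure CutoffSequence (E : Type*) [NormedAddCommGroup E] [NormedSpace ℝ E] where
  φ : ℕ → E → ℝ
  C : ℝ
  C_nonneg : 0 ≤ C
  contDiff : ∀ N, ContDiff ℝ 1 (φ N)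
  hasCompactSupport : ∀ N, HasCompactSupport (φ N)
  abs_le_one : ∀ N x, |φ N x| ≤ 1
  norm_fderiv_le : ∀ N x, ‖fderiv ℝ (φ N) x‖ ≤ C
  norm_mul_norm_fderiv_le : ∀ N x, ‖x‖ * ‖fderiv ℝ (φ N) x‖ ≤ C
  eventually_eq : ∀ x, ∀ᶠ N in atTop, φ N x = 1 ∧ fderiv ℝ (φ N) x = 0

lemma nonempty_cutoffSequence (E : Type*) [NormedAddCommGroup E] [InnerProductSpace ℝ E]
    [FiniteDimensional ℝ E] : Nonempty (CutoffSequence E) := by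
  let f : ContDiffBump (0 : E) := ⟨1, 2, one_pos, one_lt_two⟩
  have hf : ContDiff ℝ 1 f := f.contDiff
  have hsupp : HasCompactSupport (fderiv ℝ f) := f.hasCompactSupport.fderiv ℝ
  obtain ⟨C, hC⟩ := hsupp.exists_bound_of_continuous (hf.continuous_fderiv one_ne_zero)
  have hC0 : 0 ≤ C := (norm_nonneg _).trans (hC 0)
  have hfd : ∀ x, 2 < ‖x‖ → fderiv ℝ f x = 0 := by
    intro x hx
    have : x ∉ tsupport (fderiv ℝ f) := fun h => by
      have := tsupport_fderiv_subset ℝ h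
      rw [f.tsupport_eq, mem_closedBall_zero_iff] at this
      exact absurd this (not_le.2 hx)
    exact image_eq_zero_of_notMem_tsupport this
  have hxC : ∀ x, ‖x‖ * ‖fderiv ℝ f x‖ ≤ 2 * C := by
    intro x
    rcases le_or_gt ‖x‖ 2 with h | h
    · exact mul_le_mul h (hC x) (norm_nonneg _) (by norm_num)
    · rw [hfd x h]; simpa using hC0
  let r : ℕ → ℝ := fun N => (N : ℝ) + 1
  have hr : ∀ N, 0 < r N := fun N => by positivity
  have hder : ∀ N x, fderiv ℝ (fun y => f ((r N)⁻¹ • y)) x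
      = (r N)⁻¹ • fderiv ℝ f ((r N)⁻¹ • x) := fun N x => fderiv_comp_smul _
  have hder_norm : ∀ N x, ‖fderiv ℝ (fun y => f ((r N)⁻¹ • y)) x‖
      = (r N)⁻¹ * ‖fderiv ℝ f ((r N)⁻¹ • x)‖ := fun N x => by
    rw [hder, norm_smul, Real.norm_of_nonneg (inv_pos.2 (hr N)).le]
  refine ⟨⟨fun N x => f ((r N)⁻¹ • x), 2 * C, by positivity, fun N => ?_, fun N => ?_,
    fun N x => ?_, fun N x => ?_, fun N x => ?_, fun x => ?_⟩⟩
  · exact hf.comp (contDiff_const_smul _)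
  · exact f.hasCompactSupport.comp_smul (inv_pos.2 (hr N)).ne'
  · rw [abs_of_nonneg f.nonneg]; exact f.le_one
  · rw [hder_norm]
    have h1 : (r N)⁻¹ ≤ 1 := inv_le_one_of_one_le₀ (by simp [r])
    calc _ ≤ 1 * C := mul_le_mul h1 (hC _) (norm_nonneg _) zero_le_one
      _ ≤ 2 * C := by linarith
  · rw [hder_norm]
    refine le_trans (le_of_eq ?_) (hxC ((r N)⁻¹ • x))
    rw [norm_smul, Real.norm_of_nonneg (inv_pos.2 (hr N)).le]
    ring
  · obtain ⟨N₀, hN₀⟩ := exists_nat_gt ‖x‖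
    filter_upwards [eventually_ge_atTop N₀] with N hN
    have hlt : (r N)⁻¹ • x ∈ Metric.ball (0 : E) f.rIn := by
      rw [mem_ball_zero_iff, norm_smul, Real.norm_of_nonneg (inv_pos.2 (hr N)).le,
        inv_mul_lt_iff₀ (hr N)]
      have : (N₀ : ℝ) ≤ N := by exact_mod_cast hN
      change ‖x‖ < ((N : ℝ) + 1) * 1
      linarith
    refine ⟨f.one_of_mem_closedBall (Metric.ball_subset_closedBall hlt), ?_⟩
    rw [hder, (f.eventuallyEq_one_of_mem_ball hlt).fderiv_eq]
    simp

/-- Dominated convergence for sequences that are pointwise eventually equal to their limit,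
together with the induced bound on the integrals. -/
lemma tendsto_integral_of_eventually_eq {α : Type*} [MeasurableSpace α] {μ : Measure α}
    {h : ℕ → α → ℝ} {l B : α → ℝ}
    (hm : ∀ N, AEStronglyMeasurable (h N) μ) (hB : Integrable B μ) (hb : ∀ N x, |h N x| ≤ B x)
    (hl : ∀ x, ∀ᶠ N in atTop, h N x = l x) :
    Tendsto (fun N => ∫ x, h N x ∂μ) atTop (nhds (∫ x, l x ∂μ)) ∧
      ∀ N, |∫ x, h N x ∂μ| ≤ ∫ x, B x ∂μ :=
  ⟨tendsto_integral_of_dominated_convergence B hm hB (fun N => ae_of_all _ (hb N))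
    (ae_of_all _ fun x => tendsto_nhds_of_eventually_eq (hl x)),
   fun N => by
    rw [← Real.norm_eq_abs]
    exact norm_integral_le_of_norm_le hB (ae_of_all _ (hb N))⟩

/-- Weak form of the divergence of a `C¹` vector field `w v`. -/
lemma integral_mul_divergence_eq {n : ℕ} {φ w : EuclideanSpace ℝ (Fin n) → ℝ}
    {v : EuclideanSpace ℝ (Fin n) → EuclideanSpace ℝ (Fin n)} (hφ : ContDiff ℝ 1 φ)
    (hφc : HasCompactSupport φ) (hw : ContDiff ℝ 1 w) (hv : ContDiff ℝ 1 v) :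
    ∫ x, φ x * ∑ j : Fin n, fderiv ℝ (fun y => w y * v y j) x (EuclideanSpace.single j 1)
      = -∫ x, w x * fderiv ℝ φ x (v x) := by
  have hV : ∀ j, ContDiff ℝ 1 (fun y => w y * v y j) := fun j => by fun_prop
  have hdV : ∀ j, Continuous fun x => fderiv ℝ (fun y => w y * v y j) x
      (EuclideanSpace.single j 1) := fun j =>
    ((hV j).continuous_fderiv one_ne_zero).clm_apply continuous_const
  have hdφ : ∀ j : Fin n, Continuous fun x => fderiv ℝ φ x (EuclideanSpace.single j 1) := fun j =>
    (hφ.continuous_fderiv one_ne_zero).clm_apply continuous_const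
  have hdφc : ∀ j : Fin n, HasCompactSupport fun x => fderiv ℝ φ x (EuclideanSpace.single j 1) :=
    fun j => hφc.fderiv_apply ℝ _
  have h1 : ∀ j, Integrable fun x => φ x * fderiv ℝ (fun y => w y * v y j) x
      (EuclideanSpace.single j 1) := fun j =>
    (hφ.continuous.mul (hdV j)).integrable_of_hasCompactSupport hφc.mul_right
  have h2 : ∀ j, Integrable fun x => fderiv ℝ φ x (EuclideanSpace.single j 1) * (w x * v x j) :=
    fun j => ((hdφ j).mul (hV j).continuous).integrable_of_hasCompactSupport (hdφc j).mul_right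
  have h3 : ∀ j, Integrable fun x => φ x * (w x * v x j) :=
    fun j => (hφ.continuous.mul (hV j).continuous).integrable_of_hasCompactSupport hφc.mul_right
  have hibp : ∀ j, ∫ x, φ x * fderiv ℝ (fun y => w y * v y j) x (EuclideanSpace.single j 1)
      = -∫ x, fderiv ℝ φ x (EuclideanSpace.single j 1) * (w x * v x j) := fun j =>
    integral_mul_fderiv_eq_neg_fderiv_mul_of_integrable (h2 j) (h1 j) (h3 j)
      (fun x _ => (hφ.differentiable one_ne_zero) x)
      (fun x _ => ((hV j).differentiable one_ne_zero) x)
  simp_rw [Finset.mul_sum]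
  rw [integral_finsetSum _ fun j _ => h1 j]
  simp_rw [hibp]
  rw [Finset.sum_neg_distrib, ← integral_finsetSum _ fun j _ => h2 j]
  congr 2
  funext x
  have hx : v x = ∑ j, v x j • EuclideanSpace.single j (1 : ℝ) := by
    ext i; simp [Finset.sum_apply, Pi.single_apply]
  conv_rhs => rw [hx, map_sum, Finset.mul_sum]
  refine Finset.sum_congr rfl fun j _ => ?_
  rw [map_smul, smul_eq_mul]
  ring

section Parametric

variable {E : Type*} [NormedAddCommGroup E] [NormedSpace ℝ E] {T : ℝ} {q : ℝ → E → ℝ}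

lemma contDiffAt_of_contDiffOn_Icc_prod_univ {G : Type*} [NormedAddCommGroup G] [NormedSpace ℝ G]
    {q : ℝ → E → G}
    (hq : ContDiffOn ℝ 1 (fun p : ℝ × E => q p.1 p.2) (Set.Icc 0 T ×ˢ Set.univ))
    {t : ℝ} (ht : t ∈ Set.Ioo 0 T) (x : E) :
    ContDiffAt ℝ 1 (fun p : ℝ × E => q p.1 p.2) (t, x) :=
  hq.contDiffAt (prod_mem_nhds (Icc_mem_nhds ht.1 ht.2) univ_mem)

variable [MeasurableSpace E] [BorelSpace E] {μ : Measure E} [IsFiniteMeasureOnCompacts μ]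

/-- Differentiation under the integral sign against a compactly supported weight. -/
lemma hasDerivAt_integral_mul_of_hasCompactSupport
    (hq : ContDiffOn ℝ 1 (fun p : ℝ × E => q p.1 p.2) (Set.Icc 0 T ×ˢ Set.univ))
    {ψ : E → ℝ} (hψ : Continuous ψ) (hψc : HasCompactSupport ψ) {t : ℝ} (ht : t ∈ Set.Ioo 0 T) :
    HasDerivAt (fun τ => ∫ x, ψ x * q τ x ∂μ) (∫ x, ψ x * deriv (fun τ => q τ x) t ∂μ) t := by
  have hd : ∀ τ ∈ Set.Ioo 0 T, ∀ x, HasDerivAt (fun τ => q τ x)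
      (fderiv ℝ (fun p : ℝ × E => q p.1 p.2) (τ, x) (1, 0)) τ := by
    intro τ hτ x
    have h1 := ((contDiffAt_of_contDiffOn_Icc_prod_univ hq hτ x).differentiableAt
      one_ne_zero).hasFDerivAt
    have h2 : HasDerivAt (fun τ : ℝ => (τ, x)) ((1 : ℝ), (0 : E)) τ :=
      (hasDerivAt_id τ).prodMk (hasDerivAt_const τ x)
    exact h1.comp_hasDerivAt τ h2
  have hopen : IsOpen (Set.Ioo 0 T ×ˢ (Set.univ : Set E)) := isOpen_Ioo.prod isOpen_univ
  have hcont : ContinuousOn (fun p : ℝ × E => fderiv ℝ (fun p : ℝ × E => q p.1 p.2) p (1, 0))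
      (Set.Ioo 0 T ×ˢ Set.univ) :=
    ((hq.mono (Set.prod_mono Set.Ioo_subset_Icc_self subset_rfl)).continuousOn_fderiv_of_isOpen
      hopen le_rfl).clm_apply continuousOn_const
  have hqx : ∀ τ ∈ Set.Ioo 0 T, Continuous (q τ) := fun τ hτ =>
    continuous_iff_continuousAt.2 fun x =>
      (contDiffAt_of_contDiffOn_Icc_prod_univ hq hτ x).continuousAt.comp
        (f := fun x => (τ, x)) (by fun_prop)
  have hDx : ∀ τ ∈ Set.Ioo 0 T, Continuous fun x =>
      fderiv ℝ (fun p : ℝ × E => q p.1 p.2) (τ, x) (1, 0) := fun τ hτ =>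
    hcont.comp_continuous (f := fun x : E => (τ, x)) (by fun_prop) fun x => ⟨hτ, trivial⟩
  obtain ⟨a, b, hab, hsub⟩ : ∃ a b, t ∈ Set.Ioo a b ∧ Set.Icc a b ⊆ Set.Ioo 0 T :=
    ⟨t / 2, (t + T) / 2, ⟨by linarith [ht.1], by linarith [ht.2]⟩,
      fun s hs => ⟨by linarith [hs.1, ht.1], by linarith [hs.2, ht.2]⟩⟩
  obtain ⟨B, hB⟩ := (isCompact_Icc.prod hψc.isCompact :
    IsCompact (Set.Icc a b ×ˢ tsupport ψ)).exists_bound_of_continuousOn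
      (hcont.mono (Set.prod_mono hsub (Set.subset_univ _)))
  have key := hasDerivAt_integral_of_dominated_loc_of_deriv_le (μ := μ)
    (F := fun τ x => ψ x * q τ x)
    (F' := fun τ x => ψ x * fderiv ℝ (fun p : ℝ × E => q p.1 p.2) (τ, x) (1, 0))
    (bound := fun x => ‖ψ x‖ * B) (Icc_mem_nhds hab.1 hab.2)
    (by
      filter_upwards [Icc_mem_nhds hab.1 hab.2] with τ hτ
      exact ((hψ.mul (hqx τ (hsub hτ))).integrable_of_hasCompactSupport
        hψc.mul_right).aestronglyMeasurable)
    ((hψ.mul (hqx t ht)).integrable_of_hasCompactSupport hψc.mul_right)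
    ((hψ.mul (hDx t ht)).integrable_of_hasCompactSupport hψc.mul_right).aestronglyMeasurable
    (ae_of_all _ fun x τ hτ => by
      rw [norm_mul]
      by_cases hx : x ∈ tsupport ψ
      · exact mul_le_mul_of_nonneg_left (hB (τ, x) ⟨hτ, hx⟩) (norm_nonneg _)
      · simp [image_eq_zero_of_notMem_tsupport hx])
    ((hψ.integrable_of_hasCompactSupport hψc).norm.mul_const B)
    (ae_of_all _ fun x τ hτ => (hd τ (hsub hτ) x).const_mul (ψ x))
  simp_rw [fun x => (hd t ht x).deriv]
  exact key.2

lemma continuousOn_integral_mul_of_hasCompactSupport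
    (hq : ContDiffOn ℝ 1 (fun p : ℝ × E => q p.1 p.2) (Set.Icc 0 T ×ˢ Set.univ))
    {ψ : E → ℝ} (hψ : Continuous ψ) (hψc : HasCompactSupport ψ) :
    ContinuousOn (fun τ => ∫ x, ψ x * q τ x ∂μ) (Set.Icc 0 T) := by
  refine continuousOn_integral_of_compact_support hψc.isCompact
    ((hψ.comp continuous_snd).continuousOn.mul hq.continuousOn) fun τ x _ hx => ?_
  simp [image_eq_zero_of_notMem_tsupport hx]

end Parametric

/-- The algebra behind the local energy balance: `r` stands for the density, `p = r ^ γ` for the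
pressure, `q = r ^ (γ - 1)`, and `r'`, `u'`, `R`, `U` for the derivatives of density and velocity in
time and in space. -/
lemma energy_balance_algebra {n : ℕ} {r p q γ r' : ℝ} {u u' R : Fin n → ℝ}
    {U : Fin n → Fin n → ℝ} (hγ1 : γ - 1 ≠ 0) (hq : q * r = p)
    (hmass : r' + ∑ i, (r * U i i + u i * R i) = 0)
    (hmom : ∀ i, r' * u i + r * u' i + ∑ j, (r * u i * U j j + u j * (r * U i j + u i * R j))
      + γ * q * R i = 0) :
    1 / 2 * r' * ∑ i, u i ^ 2 + 1 / 2 * r * ∑ i, 2 * u i * u' i + r' * γ * q / (γ - 1)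
      = -∑ j, ((1 / 2 * r * ∑ i, u i ^ 2 + γ / (γ - 1) * p) * U j j
        + u j * (1 / 2 * r * ∑ i, 2 * u i * U i j + (∑ i, u i ^ 2) * (1 / 2 * R j)
          + γ / (γ - 1) * (γ * q * R j))) := by
  set d := ∑ i, U i i with hd
  set a := ∑ i, u i * R i with ha
  set s := ∑ i, u i ^ 2 with hs
  set c := ∑ i, u i * u' i with hc
  set b := ∑ j, ∑ i, u i * U i j * u j with hb
  have hmass' : r' + (r * d + a) = 0 := by
    rw [← hmass, Finset.sum_add_distrib, ← Finset.mul_sum]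
  have hmom' : r * c + r * b + γ * q * a = 0 := by
    have h1 : ∀ i, u i * (r * u' i) + r * ∑ j, u i * U i j * u j + γ * q * (u i * R i) = 0 := by
      intro i
      have h2 : ∑ j, (r * u i * U j j + u j * (r * U i j + u i * R j))
          = r * u i * d + (r * ∑ j, U i j * u j + u i * a) := by
        rw [hd, ha, Finset.mul_sum, Finset.mul_sum, Finset.mul_sum, ← Finset.sum_add_distrib,
          ← Finset.sum_add_distrib]
        exact Finset.sum_congr rfl fun j _ => by ring
      have h3 := hmom i
      rw [h2] at h3
      have h4 : ∑ j, u i * U i j * u j = u i * ∑ j, U i j * u j := by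
        rw [Finset.mul_sum]
        exact Finset.sum_congr rfl fun j _ => by ring
      rw [h4]
      linear_combination u i * h3 - u i ^ 2 * hmass'
    have h5 := Finset.sum_eq_zero fun i (_ : i ∈ Finset.univ) => h1 i
    rw [Finset.sum_add_distrib, Finset.sum_add_distrib, ← Finset.mul_sum, ← Finset.mul_sum,
      Finset.sum_comm] at h5
    have h6 : ∑ i, u i * (r * u' i) = r * c := by
      rw [hc, Finset.mul_sum]
      exact Finset.sum_congr rfl fun j _ => by ring
    rw [h6] at h5
    exact h5
  have hsum : ∑ j, ((1 / 2 * r * s + γ / (γ - 1) * p) * U j j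
        + u j * (1 / 2 * r * ∑ i, 2 * u i * U i j + s * (1 / 2 * R j)
          + γ / (γ - 1) * (γ * q * R j)))
      = (1 / 2 * r * s + γ / (γ - 1) * p) * d + (r * b + (1 / 2 * s + γ / (γ - 1) * (γ * q)) * a)
      := by
    clear_value s
    rw [hd, ha, hb, Finset.mul_sum, Finset.mul_sum, Finset.mul_sum, ← Finset.sum_add_distrib,
      ← Finset.sum_add_distrib]
    refine Finset.sum_congr rfl fun j _ => ?_
    have h7 : ∑ i, 2 * u i * U i j = 2 * ∑ i, u i * U i j := by
      rw [Finset.mul_sum]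
      exact Finset.sum_congr rfl fun j _ => by ring
    rw [h7, ← Finset.sum_mul]
    ring
  have hc2 : ∑ i, 2 * u i * u' i = 2 * c := by
    rw [hc, Finset.mul_sum]
    exact Finset.sum_congr rfl fun j _ => by ring
  rw [hsum, hc2, ← hq]
  obtain rfl : r' = -(r * d + a) := by linarith
  field_simp
  linear_combination (2 * (γ - 1)) * hmom'

namespace IsentropicEulerSolution

variable {n : ℕ} {γ T : ℝ} (S : IsentropicEulerSolution n γ T) {t : ℝ}

lemma continuous_ρ (ht : t ∈ Set.Icc 0 T) : Continuous (S.ρ t) :=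
  S.smooth_ρ.continuousOn.comp_continuous (f := fun x => (t, x)) (by fun_prop)
    fun _ => ⟨ht, trivial⟩

lemma continuous_u (ht : t ∈ Set.Icc 0 T) : Continuous (S.u t) :=
  S.smooth_u.continuousOn.comp_continuous (f := fun x => (t, x)) (by fun_prop)
    fun _ => ⟨ht, trivial⟩

lemma contDiff_ρ (ht : t ∈ Set.Ioo 0 T) : ContDiff ℝ 1 (S.ρ t) :=
  contDiff_iff_contDiffAt.2 fun x =>
    (contDiffAt_of_contDiffOn_Icc_prod_univ S.smooth_ρ ht x).comp x
      (f := fun x => (t, x)) (by fun_prop)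

lemma contDiff_u (ht : t ∈ Set.Ioo 0 T) : ContDiff ℝ 1 (S.u t) :=
  contDiff_iff_contDiffAt.2 fun x =>
    (contDiffAt_of_contDiffOn_Icc_prod_univ S.smooth_u ht x).comp x
      (f := fun x => (t, x)) (by fun_prop)

lemma contDiff_pressure (hγ : 1 < γ) (ht : t ∈ Set.Ioo 0 T) :
    ContDiff ℝ 1 fun x => S.ρ t x ^ γ := by
  have := ContDiff.rpow_const_of_le (m := 1) (p := γ) (f := S.ρ t)
    (by simpa using S.contDiff_ρ ht) (by simpa using hγ.le)
  simpa using this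

lemma differentiableAt_ρ_time (ht : t ∈ Set.Ioo 0 T) (x : EuclideanSpace ℝ (Fin n)) :
    DifferentiableAt ℝ (fun τ => S.ρ τ x) t :=
  ((contDiffAt_of_contDiffOn_Icc_prod_univ S.smooth_ρ ht x).differentiableAt one_ne_zero).comp t
    (f := fun τ => (τ, x)) (by fun_prop)

lemma differentiableAt_u_time (ht : t ∈ Set.Ioo 0 T) (x : EuclideanSpace ℝ (Fin n)) :
    DifferentiableAt ℝ (fun τ => S.u τ x) t :=
  ((contDiffAt_of_contDiffOn_Icc_prod_univ S.smooth_u ht x).differentiableAt one_ne_zero).comp t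
    (f := fun τ => (τ, x)) (by fun_prop)

lemma contDiffOn_momentum (i : Fin n) :
    ContDiffOn ℝ 1 (fun p : ℝ × EuclideanSpace ℝ (Fin n) => S.ρ p.1 p.2 * S.u p.1 p.2 i)
      (Set.Icc 0 T ×ˢ Set.univ) :=
  S.smooth_ρ.mul ((contDiff_piLp_apply (i := i) (p := 2)).comp_contDiffOn S.smooth_u)

/-- The local energy balance. -/
lemma deriv_energy_density (hγ : 1 < γ) (ht : t ∈ Set.Ioo 0 T) (x : EuclideanSpace ℝ (Fin n)) :
    deriv (fun τ => (1 / 2 : ℝ) * S.ρ τ x * ‖S.u τ x‖ ^ 2 + S.ρ τ x ^ γ / (γ - 1)) t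
      = -∑ j : Fin n, fderiv ℝ (fun y => ((1 / 2 : ℝ) * S.ρ t y * ‖S.u t y‖ ^ 2
          + γ / (γ - 1) * S.ρ t y ^ γ) * S.u t y j) x (EuclideanSpace.single j 1) := by
  have htc := Set.Ioo_subset_Icc_self ht
  have hγ1 : γ - 1 ≠ 0 := by linarith
  have hρt := (S.differentiableAt_ρ_time ht x).hasDerivAt
  have hut : ∀ i, HasDerivAt (fun τ => S.u τ x i) (deriv (fun τ => S.u τ x i) t) t := fun i =>
    ((differentiableAt_piLp 2).1 (S.differentiableAt_u_time ht x) i).hasDerivAt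
  have hρx := ((S.contDiff_ρ ht).differentiable one_ne_zero x).hasFDerivAt
  have hux : ∀ i, HasFDerivAt (fun y => S.u t y i) (fderiv ℝ (fun y => S.u t y i) x) x := fun i =>
    ((differentiableAt_piLp 2).1 ((S.contDiff_u ht).differentiable one_ne_zero x) i).hasFDerivAt
  have hpx : HasFDerivAt (fun y => S.ρ t y ^ γ) ((γ * S.ρ t x ^ (γ - 1)) • fderiv ℝ (S.ρ t) x) x :=
    hρx.rpow_const (Or.inr hγ.le)
  have hpt := hρt.rpow_const (p := γ) (Or.inr hγ.le)
  have hmass := S.mass_eq t htc x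
  have hmom := S.momentum_eq t htc x
  have hsqt : HasDerivAt (fun τ => ∑ i, S.u τ x i ^ 2)
      (∑ i, 2 * S.u t x i * deriv (fun τ => S.u τ x i) t) t :=
    HasDerivAt.fun_sum fun i _ => by simpa using (hut i).fun_pow 2
  have hsqx : HasFDerivAt (fun y => ∑ i, S.u t y i ^ 2)
      (∑ i, (2 * S.u t x i) • fderiv ℝ (fun y => S.u t y i) x) x :=
    HasFDerivAt.fun_sum fun i _ => by simpa using (hux i).pow 2
  simp_rw [EuclideanSpace.real_norm_sq_eq]
  rw [(((hρt.const_mul (1 / 2)).fun_mul hsqt).fun_add (hpt.div_const (γ - 1))).deriv]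
  simp_rw [fun j => ((((hρx.const_mul (1 / 2)).fun_mul hsqx).fun_add
    (hpx.const_mul (γ / (γ - 1)))).fun_mul (hux j)).fderiv]
  simp_rw [fun i => (hρt.fun_mul (hut i)).deriv, hpx.fderiv,
    fun i j => ((hρx.fun_mul (hux i)).fun_mul (hux j)).fderiv] at hmom
  simp_rw [fun i => (hρx.fun_mul (hux i)).fderiv] at hmass
  have hργ : S.ρ t x ^ (γ - 1) * S.ρ t x = S.ρ t x ^ γ := by
    rcases (S.ρ_nonneg t htc x).eq_or_lt with h | h
    · rw [← h, mul_zero, Real.zero_rpow (by linarith)]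
    · rw [← Real.rpow_add_one h.ne']; congr 1; ring
  simp only [_root_.add_apply, _root_.smul_apply, _root_.sum_apply, smul_eq_mul]
    at hmass hmom ⊢
  exact energy_balance_algebra (u := fun i => S.u t x i)
    (u' := fun i => deriv (fun τ => S.u τ x i) t)
    (R := fun j => fderiv ℝ (S.ρ t) x (EuclideanSpace.single j 1))
    (U := fun i j => fderiv ℝ (fun y => S.u t y i) x (EuclideanSpace.single j 1))
    hγ1 hργ hmass hmom

end IsentropicEulerSolution

namespace CutoffSequence

variable {n : ℕ} (K : CutoffSequence (EuclideanSpace ℝ (Fin n)))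

lemma fderiv_mul_coord (i : Fin n) (N : ℕ) (x v : EuclideanSpace ℝ (Fin n)) :
    fderiv ℝ (fun y => K.φ N y * y i) x v = K.φ N x * v i + x i * fderiv ℝ (K.φ N) x v := by
  have h1 := ((K.contDiff N).differentiable one_ne_zero x).hasFDerivAt
  have h2 : HasFDerivAt (fun y : EuclideanSpace ℝ (Fin n) => y i)
      (EuclideanSpace.proj i : EuclideanSpace ℝ (Fin n) →L[ℝ] ℝ) x :=
    (EuclideanSpace.proj i : EuclideanSpace ℝ (Fin n) →L[ℝ] ℝ).hasFDerivAt
  rw [(h1.fun_mul h2).fderiv]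
  simp

lemma fderiv_mul_sq (N : ℕ) (x v : EuclideanSpace ℝ (Fin n)) :
    fderiv ℝ (fun y => K.φ N y * (1 / 2 * ‖y‖ ^ 2)) x v
      = K.φ N x * ⟪v, x⟫_ℝ + 1 / 2 * ‖x‖ ^ 2 * fderiv ℝ (K.φ N) x v := by
  have h1 := ((K.contDiff N).differentiable one_ne_zero x).hasFDerivAt
  have h2 := ((hasStrictFDerivAt_norm_sq x).hasFDerivAt).const_mul (1 / 2 : ℝ)
  rw [(h1.fun_mul h2).fderiv]
  simp [real_inner_comm]

lemma norm_mul_abs_fderiv_le (N : ℕ) (x v : EuclideanSpace ℝ (Fin n)) :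
    ‖x‖ * |fderiv ℝ (K.φ N) x v| ≤ K.C * ‖v‖ := by
  calc ‖x‖ * |fderiv ℝ (K.φ N) x v| ≤ ‖x‖ * (‖fderiv ℝ (K.φ N) x‖ * ‖v‖) := by
        gcongr; exact (fderiv ℝ (K.φ N) x).le_opNorm v
    _ = ‖x‖ * ‖fderiv ℝ (K.φ N) x‖ * ‖v‖ := by ring
    _ ≤ K.C * ‖v‖ := by gcongr; exact K.norm_mul_norm_fderiv_le N x

lemma abs_fderiv_mul_coord_le (i : Fin n) (N : ℕ) (x v : EuclideanSpace ℝ (Fin n)) :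
    |fderiv ℝ (fun y => K.φ N y * y i) x v| ≤ (1 + K.C) * ‖v‖ := by
  rw [fderiv_mul_coord]
  have h1 : |K.φ N x * v i| ≤ 1 * ‖v‖ := by
    rw [abs_mul]
    exact mul_le_mul (K.abs_le_one N x) (PiLp.norm_apply_le v i) (abs_nonneg _) zero_le_one
  have h2 : |x i * fderiv ℝ (K.φ N) x v| ≤ K.C * ‖v‖ := by
    rw [abs_mul]
    exact (mul_le_mul_of_nonneg_right (PiLp.norm_apply_le x i) (abs_nonneg _)).trans
      (K.norm_mul_abs_fderiv_le N x v)
  linarith [abs_add_le (K.φ N x * v i) (x i * fderiv ℝ (K.φ N) x v)]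

lemma abs_fderiv_mul_sq_le (N : ℕ) (x v : EuclideanSpace ℝ (Fin n)) :
    |fderiv ℝ (fun y => K.φ N y * (1 / 2 * ‖y‖ ^ 2)) x v| ≤ (1 + K.C) * (‖v‖ * ‖x‖) := by
  rw [fderiv_mul_sq]
  have h1 : |K.φ N x * ⟪v, x⟫_ℝ| ≤ 1 * (‖v‖ * ‖x‖) := by
    rw [abs_mul]
    exact mul_le_mul (K.abs_le_one N x) (abs_real_inner_le_norm v x) (abs_nonneg _) zero_le_one
  have h2 : |1 / 2 * ‖x‖ ^ 2 * fderiv ℝ (K.φ N) x v| ≤ K.C * (‖v‖ * ‖x‖) := by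
    rw [abs_mul, abs_of_nonneg (by positivity)]
    have h3 := mul_le_mul_of_nonneg_left (K.norm_mul_abs_fderiv_le N x v) (norm_nonneg x)
    have h4 : 0 ≤ ‖x‖ * (‖x‖ * |fderiv ℝ (K.φ N) x v|) := by positivity
    nlinarith
  linarith [abs_add_le (K.φ N x * ⟪v, x⟫_ℝ) (1 / 2 * ‖x‖ ^ 2 * fderiv ℝ (K.φ N) x v)]

lemma contDiff_mul_coord (i : Fin n) (N : ℕ) : ContDiff ℝ 1 fun y => K.φ N y * y i :=
  (K.contDiff N).mul (by fun_prop)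

lemma contDiff_mul_sq (N : ℕ) : ContDiff ℝ 1 fun y => K.φ N y * (1 / 2 * ‖y‖ ^ 2) :=
  (K.contDiff N).mul (contDiff_const.mul (contDiff_norm_sq ℝ))

end CutoffSequence

/-- A density with a weak flux form has integral zero. -/
lemma integral_eq_zero_of_weak_flux {n : ℕ} {d w : EuclideanSpace ℝ (Fin n) → ℝ}
    {v : EuclideanSpace ℝ (Fin n) → EuclideanSpace ℝ (Fin n)}
    (hw : Continuous w) (hv : Continuous v) (hi : Integrable fun x => w x * ‖v x‖)
    (h : ∀ φ : EuclideanSpace ℝ (Fin n) → ℝ, ContDiff ℝ 1 φ → HasCompactSupport φ →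
      ∫ x, φ x * d x = ∫ x, w x * fderiv ℝ φ x (v x)) :
    ∫ x, d x = 0 := by
  obtain ⟨K⟩ := nonempty_cutoffSequence (EuclideanSpace ℝ (Fin n))
  by_cases hd : Integrable d
  swap
  · exact integral_undef hd
  have h1 := (tendsto_integral_of_eventually_eq (μ := volume) (h := fun N x => K.φ N x * d x)
    (l := d) (B := fun x => |d x|)
    (fun N => (K.contDiff N).continuous.aestronglyMeasurable.mul hd.1) hd.abs
    (fun N x => by
      rw [abs_mul]
      exact mul_le_of_le_one_left (abs_nonneg _) (K.abs_le_one N x))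
    (fun x => (K.eventually_eq x).mono fun N hN => by rw [hN.1, one_mul])).1
  have h2 := (tendsto_integral_of_eventually_eq (μ := volume)
    (h := fun N x => w x * fderiv ℝ (K.φ N) x (v x))
    (l := fun _ => 0) (B := fun x => K.C * |w x * ‖v x‖|)
    (fun N => (hw.mul (((K.contDiff N).continuous_fderiv one_ne_zero).clm_apply
      hv)).aestronglyMeasurable) (hi.abs.const_mul _)
    (fun N x => by
      rw [abs_mul, abs_mul, abs_norm]
      calc |w x| * |fderiv ℝ (K.φ N) x (v x)| ≤ |w x| * (K.C * ‖v x‖) := by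
            gcongr
            exact (fderiv ℝ (K.φ N) x).le_of_opNorm_le (K.norm_fderiv_le N x) (v x)
        _ = K.C * (|w x| * ‖v x‖) := by ring)
    (fun x => (K.eventually_eq x).mono fun N hN => by simp [hN.2])).1
  rw [integral_zero] at h2
  exact tendsto_nhds_unique h1 (h2.congr fun N => (h _ (K.contDiff N) (K.hasCompactSupport N)).symm)
/-- A function whose derivative vanishes inside an interval is constant on it. -/
lemma eq_left_of_hasDerivAt_zero {f : ℝ → ℝ} {T : ℝ} (hc : ContinuousOn f (Set.Icc 0 T))
    (hd : ∀ t ∈ Set.Ioo 0 T, HasDerivAt f 0 t) {t : ℝ} (ht : t ∈ Set.Icc 0 T) : f t = f 0 := by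
  rcases ht.1.eq_or_lt with rfl | h0
  · rfl
  obtain ⟨c, -, hc'⟩ := exists_hasDerivAt_eq_slope f (fun _ => 0) h0
    (hc.mono (Set.Icc_subset_Icc_right ht.2)) fun x hx => hd x ⟨hx.1, hx.2.trans_le ht.2⟩
  rw [eq_div_iff (by linarith)] at hc'
  linarith

namespace IsentropicEulerSolution

variable {n : ℕ} {γ T : ℝ} (S : IsentropicEulerSolution n γ T) {t : ℝ}

lemma exists_norm_u_le (ht : t ∈ Set.Icc 0 T) : ∃ c, ∀ x, ‖S.u t x‖ ≤ c := by
  have h1 : ∀ᶠ x in Bornology.cobounded _, ‖S.u t x‖ ≤ 1 :=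
    (S.decay_u t ht).eventually_le_const one_pos
  rw [Metric.cobounded_eq_cocompact] at h1
  obtain ⟨s, hs, hsub⟩ := mem_cocompact.1 h1
  obtain ⟨c, hc⟩ := hs.exists_bound_of_continuousOn (S.continuous_u ht).continuousOn
  refine ⟨max c 1, fun x => ?_⟩
  by_cases hx : x ∈ s
  · exact (hc x hx).trans (le_max_left _ _)
  · exact (hsub hx).trans (le_max_right _ _)

lemma integral_mul_deriv_density {φ : EuclideanSpace ℝ (Fin n) → ℝ}
    (hφ : ContDiff ℝ 1 φ) (hφc : HasCompactSupport φ) (ht : t ∈ Set.Ioo 0 T) :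
    ∫ x, φ x * deriv (fun τ => S.ρ τ x) t = ∫ x, S.ρ t x * fderiv ℝ φ x (S.u t x) := by
  have h := integral_mul_divergence_eq hφ hφc (S.contDiff_ρ ht) (S.contDiff_u ht)
  rw [← neg_eq_iff_eq_neg.2 h, ← integral_neg]
  congr 1
  funext x
  have := S.mass_eq t (Set.Ioo_subset_Icc_self ht) x
  rw [eq_neg_of_add_eq_zero_left this, mul_neg]

lemma integral_mul_deriv_energy {φ : EuclideanSpace ℝ (Fin n) → ℝ}
    (hφ : ContDiff ℝ 1 φ) (hφc : HasCompactSupport φ) (hγ : 1 < γ) (ht : t ∈ Set.Ioo 0 T) :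
    ∫ x, φ x * deriv (fun τ => (1 / 2 : ℝ) * S.ρ τ x * ‖S.u τ x‖ ^ 2 + S.ρ τ x ^ γ / (γ - 1)) t
      = ∫ x, ((1 / 2 : ℝ) * S.ρ t x * ‖S.u t x‖ ^ 2 + γ / (γ - 1) * S.ρ t x ^ γ)
        * fderiv ℝ φ x (S.u t x) := by
  have hw : ContDiff ℝ 1 fun x => (1 / 2 : ℝ) * S.ρ t x * ‖S.u t x‖ ^ 2
      + γ / (γ - 1) * S.ρ t x ^ γ :=
    ((contDiff_const.mul (S.contDiff_ρ ht)).mul ((S.contDiff_u ht).norm_sq ℝ)).add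
      (contDiff_const.mul (S.contDiff_pressure hγ ht))
  have h := integral_mul_divergence_eq hφ hφc hw (S.contDiff_u ht)
  rw [← neg_eq_iff_eq_neg.2 h, ← integral_neg]
  congr 1
  funext x
  rw [S.deriv_energy_density hγ ht x, mul_neg]

lemma integral_mul_deriv_momentum {φ : EuclideanSpace ℝ (Fin n) → ℝ}
    (hφ : ContDiff ℝ 1 φ) (hφc : HasCompactSupport φ) (hγ : 1 < γ) (ht : t ∈ Set.Ioo 0 T) (i : Fin n) :
    ∫ x, φ x * deriv (fun τ => S.ρ τ x * S.u τ x i) t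
      = (∫ x, S.ρ t x * S.u t x i * fderiv ℝ φ x (S.u t x))
        + ∫ x, S.ρ t x ^ γ * fderiv ℝ φ x (EuclideanSpace.single i 1) := by
  have hρ := S.contDiff_ρ ht
  have hu := S.contDiff_u ht
  have hw : ContDiff ℝ 1 fun x => S.ρ t x * S.u t x i := by fun_prop
  have hp := S.contDiff_pressure hγ ht
  have hdp : Continuous fun x => fderiv ℝ (fun y => S.ρ t y ^ γ) x (EuclideanSpace.single i 1) :=
    (hp.continuous_fderiv one_ne_zero).clm_apply continuous_const
  have hdφ : Continuous fun x => fderiv ℝ φ x (EuclideanSpace.single i 1) :=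
    (hφ.continuous_fderiv one_ne_zero).clm_apply continuous_const
  have hi1 : Integrable fun x => φ x * fderiv ℝ (fun y => S.ρ t y ^ γ) x
      (EuclideanSpace.single i 1) :=
    (hφ.continuous.mul hdp).integrable_of_hasCompactSupport hφc.mul_right
  have h1 := integral_mul_divergence_eq hφ hφc hw hu
  have h2 : ∫ x, φ x * fderiv ℝ (fun y => S.ρ t y ^ γ) x (EuclideanSpace.single i 1)
      = -∫ x, fderiv ℝ φ x (EuclideanSpace.single i 1) * S.ρ t x ^ γ :=
    integral_mul_fderiv_eq_neg_fderiv_mul_of_integrable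
      ((hdφ.mul hp.continuous).integrable_of_hasCompactSupport (hφc.fderiv_apply ℝ _).mul_right)
      hi1
      ((hφ.continuous.mul hp.continuous).integrable_of_hasCompactSupport hφc.mul_right)
      (fun x _ => hφ.differentiable one_ne_zero x) (fun x _ => hp.differentiable one_ne_zero x)
  have hi2 : Integrable fun x => φ x * ∑ j : Fin n, fderiv ℝ
      (fun y => S.ρ t y * S.u t y i * S.u t y j) x (EuclideanSpace.single j 1) := by
    refine (hφ.continuous.mul (continuous_finsetSum _ fun j _ => ?_)).integrable_of_hasCompactSupport
      hφc.mul_right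
    have hwj : ContDiff ℝ 1 fun y => S.ρ t y * S.u t y i * S.u t y j := by fun_prop
    exact (hwj.continuous_fderiv one_ne_zero).clm_apply continuous_const
  simp_rw [mul_comm (S.ρ t _ ^ γ)]
  rw [← neg_eq_iff_eq_neg.2 h1, ← neg_eq_iff_eq_neg.2 h2, ← neg_add, ← integral_add hi2 hi1,
    ← integral_neg]
  congr 1
  funext x
  have := S.momentum_eq t (Set.Ioo_subset_Icc_self ht) x i
  linear_combination φ x * this

lemma integrable_energy_density (ht : t ∈ Set.Icc 0 T) :
    Integrable fun x => (1 / 2 : ℝ) * S.ρ t x * ‖S.u t x‖ ^ 2 + γ / (γ - 1) * S.ρ t x ^ γ := by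
  simp_rw [mul_assoc (1 / 2 : ℝ)]
  exact ((S.int_ρu2 t ht).const_mul _).add ((S.int_ργ t ht).const_mul _)

lemma M_eq (ht : t ∈ Set.Icc 0 T) : S.M t = S.M 0 := by
  refine eq_left_of_hasDerivAt_zero (f := S.M)
    (fun s hs => (S.hM s hs).continuousAt.continuousWithinAt) (fun s hs => ?_) ht
  have hsc := Set.Ioo_subset_Icc_self hs
  have h0 : ∫ x, deriv (fun τ => S.ρ τ x) s = 0 :=
    integral_eq_zero_of_weak_flux (S.continuous_ρ hsc) (S.continuous_u hsc) (S.int_ρu s hsc)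
      fun φ hφ hφc => S.integral_mul_deriv_density hφ hφc hs
  rw [← h0]
  exact S.hM s hsc

lemma IE_eq_integral (ht : t ∈ Set.Icc 0 T) :
    S.IE t = ∫ x, ((1 / 2 : ℝ) * S.ρ t x * ‖S.u t x‖ ^ 2 + S.ρ t x ^ γ / (γ - 1)) := by
  simp_rw [mul_assoc (1 / 2 : ℝ)]
  rw [integral_add ((S.int_ρu2 t ht).const_mul _) ((S.int_ργ t ht).div_const _),
    integral_const_mul, integral_div]
  simp only [IE, Ek, I]
  ring

lemma IE_eq (hγ : 1 < γ) (ht : t ∈ Set.Icc 0 T) : S.IE t = S.IE 0 := by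
  rw [S.IE_eq_integral ht, S.IE_eq_integral ⟨le_rfl, ht.1.trans ht.2⟩]
  refine eq_left_of_hasDerivAt_zero
    (f := fun t => ∫ x, ((1 / 2 : ℝ) * S.ρ t x * ‖S.u t x‖ ^ 2 + S.ρ t x ^ γ / (γ - 1)))
    (fun s hs => (S.hIE s hs).continuousAt.continuousWithinAt) (fun s hs => ?_) ht
  have hsc := Set.Ioo_subset_Icc_self hs
  obtain ⟨c, hc⟩ := S.exists_norm_u_le hsc
  have hw : Continuous fun x => (1 / 2 : ℝ) * S.ρ s x * ‖S.u s x‖ ^ 2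
      + γ / (γ - 1) * S.ρ s x ^ γ :=
    ((continuous_const.mul (S.continuous_ρ hsc)).mul ((S.continuous_u hsc).norm.pow 2)).add
      (continuous_const.mul (S.contDiff_pressure hγ hs).continuous)
  have h0 : ∫ x, deriv (fun τ => (1 / 2 : ℝ) * S.ρ τ x * ‖S.u τ x‖ ^ 2
      + S.ρ τ x ^ γ / (γ - 1)) s = 0 :=
    integral_eq_zero_of_weak_flux hw (S.continuous_u hsc)
      ((S.integrable_energy_density hsc).mul_bdd (c := c) (S.continuous_u hsc).norm.aestronglyMeasurable
        (ae_of_all _ fun x => by rw [norm_norm]; exact hc x))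
      fun φ hφ hφc => S.integral_mul_deriv_energy hφ hφc hγ hs
  rw [← h0]
  exact S.hIE s hsc

variable (K : CutoffSequence (EuclideanSpace ℝ (Fin n)))

lemma integral_pressure_eq (hγ : 1 < γ) (t : ℝ) : ∫ x, S.ρ t x ^ γ = (γ - 1) * S.I t := by
  have : γ - 1 ≠ 0 := by linarith
  rw [I]
  field_simp

lemma I_nonneg (hγ : 1 < γ) (ht : t ∈ Set.Icc 0 T) : 0 ≤ S.I t :=
  mul_nonneg (by rw [one_div, inv_nonneg]; linarith)
    (integral_nonneg fun x => Real.rpow_nonneg (S.ρ_nonneg t ht x) γ)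

lemma Ek_nonneg (ht : t ∈ Set.Icc 0 T) : 0 ≤ S.Ek t :=
  mul_nonneg (by norm_num)
    (integral_nonneg fun x => mul_nonneg (S.ρ_nonneg t ht x) (by positivity))

lemma G_nonneg (ht : t ∈ Set.Icc 0 T) : 0 ≤ S.G t :=
  mul_nonneg (by norm_num)
    (integral_nonneg fun x => mul_nonneg (S.ρ_nonneg t ht x) (by positivity))

lemma integral_norm_momentum_weight_le (ht : t ∈ Set.Icc 0 T) :
    ∫ x, S.ρ t x * ‖S.u t x‖ * ‖x‖ ≤ S.Ek t + S.G t := by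
  have h1 := (S.int_ρu2 t ht).const_mul (1 / 2)
  have h2 := (S.int_ρx2 t ht).const_mul (1 / 2)
  rw [Ek, G, ← integral_const_mul, ← integral_const_mul, ← integral_add h1 h2]
  refine integral_mono (S.int_ρux t ht) (h1.add h2) fun x => ?_
  have h3 := mul_nonneg (S.ρ_nonneg t ht x) (sq_nonneg (‖S.u t x‖ - ‖x‖))
  nlinarith

/-- Nonnegativity of `½ ∫ ρ |x - s u|²`. -/
lemma sq_mul_I_le (ht : t ∈ Set.Icc 0 T) (s : ℝ) :
    s ^ 2 * S.I t ≤ S.G t - s * S.F t + s ^ 2 * S.IE t := by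
  have h1 := (S.int_ρu2 t ht).const_mul (1 / 2 * s ^ 2)
  have h2 := (S.int_ρx2 t ht).const_mul (1 / 2)
  have hF : Integrable fun x => S.ρ t x * ⟪S.u t x, x⟫_ℝ := by
    refine (S.int_ρux t ht).mono' ((S.continuous_ρ ht).mul
      ((S.continuous_u ht).inner continuous_id)).aestronglyMeasurable (ae_of_all _ fun x => ?_)
    rw [Real.norm_eq_abs, abs_mul, abs_of_nonneg (S.ρ_nonneg t ht x), mul_assoc]
    exact mul_le_mul_of_nonneg_left (abs_real_inner_le_norm _ _) (S.ρ_nonneg t ht x)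
  have h3 := hF.const_mul s
  have h4 : 0 ≤ ∫ x, ((1 / 2 * s ^ 2 * (S.ρ t x * ‖S.u t x‖ ^ 2) + 1 / 2 * (S.ρ t x * ‖x‖ ^ 2))
      - s * (S.ρ t x * ⟪S.u t x, x⟫_ℝ)) := by
    refine integral_nonneg fun x => ?_
    have h5 := mul_nonneg (S.ρ_nonneg t ht x) (sq_nonneg ‖x - s • S.u t x‖)
    rw [norm_sub_sq_real, real_inner_smul_right, norm_smul, mul_pow, Real.norm_eq_abs, sq_abs,
      real_inner_comm] at h5
    simp only [Pi.zero_apply]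
    linarith
  have h12 : Integrable fun x => 1 / 2 * s ^ 2 * (S.ρ t x * ‖S.u t x‖ ^ 2)
      + 1 / 2 * (S.ρ t x * ‖x‖ ^ 2) := h1.add h2
  rw [integral_sub h12 h3, integral_add h1 h2, integral_const_mul, integral_const_mul,
    integral_const_mul] at h4
  simp only [IE, G, Ek, F]
  linarith

lemma tendsto_truncated_inertia (ht : t ∈ Set.Icc 0 T) :
    Tendsto (fun N => ∫ x, K.φ N x * (1 / 2 * ‖x‖ ^ 2) * S.ρ t x) atTop (nhds (S.G t)) ∧
      ∀ N, |∫ x, K.φ N x * (1 / 2 * ‖x‖ ^ 2) * S.ρ t x| ≤ S.G t := by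
  rw [G, ← integral_const_mul]
  refine tendsto_integral_of_eventually_eq
    (fun N => ((K.contDiff_mul_sq N).continuous.mul (S.continuous_ρ ht)).aestronglyMeasurable)
    ((S.int_ρx2 t ht).const_mul _) (fun N x => ?_)
    (fun x => (K.eventually_eq x).mono fun N hN => by rw [hN.1]; ring)
  have hρ := S.ρ_nonneg t ht x
  rw [mul_assoc, abs_mul, abs_of_nonneg (a := 1 / 2 * ‖x‖ ^ 2 * S.ρ t x) (by positivity)]
  calc |K.φ N x| * (1 / 2 * ‖x‖ ^ 2 * S.ρ t x) ≤ 1 * (1 / 2 * ‖x‖ ^ 2 * S.ρ t x) :=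
        mul_le_mul_of_nonneg_right (K.abs_le_one N x) (by positivity)
    _ = 1 / 2 * (S.ρ t x * ‖x‖ ^ 2) := by ring

lemma tendsto_truncated_inertia_deriv (ht : t ∈ Set.Icc 0 T) :
    Tendsto (fun N => ∫ x, S.ρ t x * fderiv ℝ (fun y => K.φ N y * (1 / 2 * ‖y‖ ^ 2)) x (S.u t x))
        atTop (nhds (S.F t)) ∧
      ∀ N, |∫ x, S.ρ t x * fderiv ℝ (fun y => K.φ N y * (1 / 2 * ‖y‖ ^ 2)) x (S.u t x)|
        ≤ (1 + K.C) * ∫ x, S.ρ t x * ‖S.u t x‖ * ‖x‖ := by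
  rw [← integral_const_mul]
  refine tendsto_integral_of_eventually_eq
    (fun N => ((S.continuous_ρ ht).mul (((K.contDiff_mul_sq N).continuous_fderiv
      one_ne_zero).clm_apply (S.continuous_u ht))).aestronglyMeasurable)
    ((S.int_ρux t ht).const_mul _) (fun N x => ?_)
    (fun x => (K.eventually_eq x).mono fun N hN => by
      rw [K.fderiv_mul_sq, hN.1, hN.2]; simp)
  have hρ := S.ρ_nonneg t ht x
  rw [abs_mul, abs_of_nonneg hρ]
  calc S.ρ t x * |fderiv ℝ (fun y => K.φ N y * (1 / 2 * ‖y‖ ^ 2)) x (S.u t x)|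
      ≤ S.ρ t x * ((1 + K.C) * (‖S.u t x‖ * ‖x‖)) :=
        mul_le_mul_of_nonneg_left (K.abs_fderiv_mul_sq_le N x _) hρ
    _ = (1 + K.C) * (S.ρ t x * ‖S.u t x‖ * ‖x‖) := by ring

lemma tendsto_truncated_momentum_weight (ht : t ∈ Set.Icc 0 T) :
    Tendsto (fun N => ∑ i, ∫ x, K.φ N x * x i * (S.ρ t x * S.u t x i)) atTop (nhds (S.F t)) ∧
      ∀ N, |∑ i, ∫ x, K.φ N x * x i * (S.ρ t x * S.u t x i)|
        ≤ n * ∫ x, S.ρ t x * ‖S.u t x‖ * ‖x‖ := by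
  have hcont : ∀ i, Continuous fun x => S.ρ t x * S.u t x i := fun i =>
    (S.continuous_ρ ht).mul ((EuclideanSpace.proj (𝕜 := ℝ) i).continuous.comp (S.continuous_u ht))
  have hle : ∀ i x, |x i * (S.ρ t x * S.u t x i)| ≤ S.ρ t x * ‖S.u t x‖ * ‖x‖ := fun i x => by
    have hρ := S.ρ_nonneg t ht x
    rw [abs_mul, abs_mul, abs_of_nonneg hρ, mul_comm]
    exact mul_le_mul (mul_le_mul_of_nonneg_left (PiLp.norm_apply_le (S.u t x) i) hρ)
      (PiLp.norm_apply_le x i) (abs_nonneg _) (by positivity)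
  have h : ∀ i, Tendsto (fun N => ∫ x, K.φ N x * x i * (S.ρ t x * S.u t x i)) atTop
        (nhds (∫ x, x i * (S.ρ t x * S.u t x i))) ∧
      ∀ N, |∫ x, K.φ N x * x i * (S.ρ t x * S.u t x i)|
        ≤ ∫ x, S.ρ t x * ‖S.u t x‖ * ‖x‖ := fun i => by
    refine tendsto_integral_of_eventually_eq
      (fun N => ((K.contDiff_mul_coord i N).continuous.mul (hcont i)).aestronglyMeasurable)
      (S.int_ρux t ht) (fun N x => ?_)
      (fun x => (K.eventually_eq x).mono fun N hN => by rw [hN.1]; ring)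
    rw [mul_assoc, abs_mul]
    exact (mul_le_of_le_one_left (abs_nonneg _) (K.abs_le_one N x)).trans (hle i x)
  have hF : S.F t = ∑ i, ∫ x, x i * (S.ρ t x * S.u t x i) := by
    have hi : ∀ i, Integrable fun x => x i * (S.ρ t x * S.u t x i) := fun i =>
      (S.int_ρux t ht).mono'
        ((EuclideanSpace.proj (𝕜 := ℝ) i).continuous.mul (hcont i)).aestronglyMeasurable
        (ae_of_all _ (hle i))
    rw [F, ← integral_finsetSum _ fun i _ => hi i]
    congr 1
    funext x
    rw [PiLp.inner_apply, Finset.mul_sum]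
    refine Finset.sum_congr rfl fun i _ => ?_
    simp only [RCLike.inner_apply, conj_trivial]
    ring
  refine ⟨hF ▸ tendsto_finsetSum _ fun i _ => (h i).1, fun N => ?_⟩
  refine (Finset.abs_sum_le_sum_abs _ _).trans ((Finset.sum_le_sum fun i _ => (h i).2 N).trans ?_)
  simp

lemma tendsto_truncated_momentum_weight_deriv (hγ : 1 < γ) (ht : t ∈ Set.Icc 0 T) :
    Tendsto (fun N => ∑ i, ((∫ x, S.ρ t x * S.u t x i *
          fderiv ℝ (fun y => K.φ N y * y i) x (S.u t x))
        + ∫ x, S.ρ t x ^ γ * fderiv ℝ (fun y => K.φ N y * y i) x (EuclideanSpace.single i 1)))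
        atTop (nhds (2 * S.Ek t + n * (γ - 1) * S.I t)) ∧
      ∀ N, |∑ i, ((∫ x, S.ρ t x * S.u t x i *
          fderiv ℝ (fun y => K.φ N y * y i) x (S.u t x))
        + ∫ x, S.ρ t x ^ γ * fderiv ℝ (fun y => K.φ N y * y i) x (EuclideanSpace.single i 1))|
        ≤ n * ((1 + K.C) * (2 * S.Ek t + (γ - 1) * S.I t)) := by
  have hcont : ∀ i, Continuous fun x => S.ρ t x * S.u t x i := fun i =>
    (S.continuous_ρ ht).mul ((EuclideanSpace.proj (𝕜 := ℝ) i).continuous.comp (S.continuous_u ht))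
  have hEk : ∫ x, S.ρ t x * ‖S.u t x‖ ^ 2 = 2 * S.Ek t := by rw [Ek]; ring
  have h1 : ∀ i, Tendsto (fun N => ∫ x, S.ρ t x * S.u t x i *
          fderiv ℝ (fun y => K.φ N y * y i) x (S.u t x)) atTop
        (nhds (∫ x, S.ρ t x * S.u t x i ^ 2)) ∧
      ∀ N, |∫ x, S.ρ t x * S.u t x i * fderiv ℝ (fun y => K.φ N y * y i) x (S.u t x)|
        ≤ ∫ x, (1 + K.C) * (S.ρ t x * ‖S.u t x‖ ^ 2) := fun i => by
    refine tendsto_integral_of_eventually_eq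
      (fun N => ((hcont i).mul (((K.contDiff_mul_coord i N).continuous_fderiv
        one_ne_zero).clm_apply (S.continuous_u ht))).aestronglyMeasurable)
      ((S.int_ρu2 t ht).const_mul _) (fun N x => ?_)
      (fun x => (K.eventually_eq x).mono fun N hN => by
        rw [K.fderiv_mul_coord, hN.1, hN.2, _root_.zero_apply]; ring)
    have hρ := S.ρ_nonneg t ht x
    rw [abs_mul, abs_mul, abs_of_nonneg hρ]
    calc S.ρ t x * |S.u t x i| * |fderiv ℝ (fun y => K.φ N y * y i) x (S.u t x)|
        ≤ S.ρ t x * ‖S.u t x‖ * ((1 + K.C) * ‖S.u t x‖) :=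
          mul_le_mul (mul_le_mul_of_nonneg_left (PiLp.norm_apply_le (S.u t x) i) hρ)
            (K.abs_fderiv_mul_coord_le i N x _) (abs_nonneg _) (by positivity)
      _ = (1 + K.C) * (S.ρ t x * ‖S.u t x‖ ^ 2) := by ring
  have h2 : ∀ i, Tendsto (fun N => ∫ x, S.ρ t x ^ γ *
          fderiv ℝ (fun y => K.φ N y * y i) x (EuclideanSpace.single i 1)) atTop
        (nhds (∫ x, S.ρ t x ^ γ)) ∧
      ∀ N, |∫ x, S.ρ t x ^ γ * fderiv ℝ (fun y => K.φ N y * y i) x (EuclideanSpace.single i 1)|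
        ≤ ∫ x, (1 + K.C) * S.ρ t x ^ γ := fun i => by
    refine tendsto_integral_of_eventually_eq
      (fun N => (((S.continuous_ρ ht).rpow_const fun _ => Or.inr (by linarith)).mul
        (((K.contDiff_mul_coord i N).continuous_fderiv
        one_ne_zero).clm_apply continuous_const)).aestronglyMeasurable)
      ((S.int_ργ t ht).const_mul _) (fun N x => ?_)
      (fun x => (K.eventually_eq x).mono fun N hN => by
        rw [K.fderiv_mul_coord, hN.1, hN.2]; simp)
    have hp := Real.rpow_nonneg (S.ρ_nonneg t ht x) γ
    rw [abs_mul, abs_of_nonneg hp, mul_comm]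
    refine mul_le_mul_of_nonneg_right ((K.abs_fderiv_mul_coord_le i N x _).trans ?_) hp
    simp
  have hsum : ∑ i, ((∫ x, S.ρ t x * S.u t x i ^ 2) + ∫ x, S.ρ t x ^ γ)
      = 2 * S.Ek t + n * (γ - 1) * S.I t := by
    have hi : ∀ i, Integrable fun x => S.ρ t x * S.u t x i ^ 2 := fun i => by
      refine (S.int_ρu2 t ht).mono' ((S.continuous_ρ ht).mul
        (((EuclideanSpace.proj (𝕜 := ℝ) i).continuous.comp
          (S.continuous_u ht)).pow 2)).aestronglyMeasurable (ae_of_all _ fun x => ?_)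
      rw [norm_mul, Real.norm_of_nonneg (S.ρ_nonneg t ht x), norm_pow]
      exact mul_le_mul_of_nonneg_left
        (pow_le_pow_left₀ (norm_nonneg _) (PiLp.norm_apply_le _ i) 2) (S.ρ_nonneg t ht x)
    rw [Finset.sum_add_distrib, ← integral_finsetSum _ fun i _ => hi i, ← hEk,
      S.integral_pressure_eq hγ]
    simp_rw [← Finset.mul_sum, ← EuclideanSpace.real_norm_sq_eq]
    rw [Finset.sum_const, Finset.card_univ, Fintype.card_fin, nsmul_eq_mul]
    ring
  refine ⟨hsum ▸ tendsto_finsetSum _ fun i _ => (h1 i).1.add (h2 i).1, fun N => ?_⟩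
  refine (Finset.abs_sum_le_sum_abs _ _).trans ((Finset.sum_le_sum fun i _ =>
    (abs_add_le _ _).trans (add_le_add ((h1 i).2 N) ((h2 i).2 N))).trans ?_)
  rw [integral_const_mul, integral_const_mul, hEk, S.integral_pressure_eq hγ]
  simp [mul_add]

/-- Growth of the moment of inertia and decay of the potential energy. -/
lemma G_le_and_I_le (hγ : 1 < γ) (hk : (n : ℝ) * (γ - 1) / 2 ≤ 1) (ht : t ∈ Set.Icc 0 T) :
    S.G t ≤ S.G 0 + S.F 0 * t + S.IE 0 * t ^ 2 ∧
      S.I t * (t + 1) ^ (2 * ((n : ℝ) * (γ - 1) / 2)) ≤ S.G 0 - S.F 0 + S.IE 0 := by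
  obtain ⟨K⟩ := nonempty_cutoffSequence (EuclideanSpace ℝ (Fin n))
  have hsub : Set.Ioo 0 T ⊆ Set.Icc 0 T := Set.Ioo_subset_Icc_self
  have hGcont : ContinuousOn S.G (Set.Icc 0 T) := fun s hs =>
    (S.hG s hs).continuousAt.continuousWithinAt
  obtain ⟨g, hg⟩ := isCompact_Icc.exists_bound_of_continuousOn hGcont
  have hG : ∀ s ∈ Set.Icc 0 T, S.G s ≤ g := fun s hs => (le_abs_self _).trans (hg s hs)
  have hg0 : 0 ≤ g := (S.G_nonneg ht).trans (hG t ht)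
  have hEI : ∀ s ∈ Set.Icc 0 T, S.Ek s + S.I s = S.IE 0 := fun s hs => S.IE_eq hγ hs
  have hE0 : 0 ≤ S.IE 0 := by
    linarith [hEI t ht, S.Ek_nonneg ht, S.I_nonneg hγ ht]
  have hC := K.C_nonneg
  have hγ0 : 0 ≤ γ - 1 := by linarith
  have hW : ∀ s ∈ Set.Icc 0 T, ∫ x, S.ρ s x * ‖S.u s x‖ * ‖x‖ ≤ S.IE 0 + g := fun s hs => by
    linarith [S.integral_norm_momentum_weight_le hs, hG s hs, S.I_nonneg hγ hs, hEI s hs]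
  set C₁ := (n : ℝ) * (S.IE 0 + g) with hC₁
  set C₂ := (1 + K.C) * (S.IE 0 + g) with hC₂
  set C₃ := (n : ℝ) * ((1 + K.C) * (2 * S.IE 0 + (γ - 1) * S.IE 0)) with hC₃
  have hC₁0 : 0 ≤ C₁ := by positivity
  have hC₂0 : 0 ≤ C₂ := by positivity
  have hC₃0 : 0 ≤ C₃ := by positivity
  refine inertia_le_and_potential_le (C := g + C₁ + C₂ + C₃) hk
    (Gs := fun N s => ∫ x, K.φ N x * (1 / 2 * ‖x‖ ^ 2) * S.ρ s x)
    (Fs := fun N s => ∑ i, ∫ x, K.φ N x * x i * (S.ρ s x * S.u s x i))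
    (gs := fun N s => ∫ x, S.ρ s x *
      fderiv ℝ (fun y => K.φ N y * (1 / 2 * ‖y‖ ^ 2)) x (S.u s x))
    (fs := fun N s => ∑ i, ((∫ x, S.ρ s x * S.u s x i *
        fderiv ℝ (fun y => K.φ N y * y i) x (S.u s x))
      + ∫ x, S.ρ s x ^ γ * fderiv ℝ (fun y => K.φ N y * y i) x (EuclideanSpace.single i 1)))
    (G := S.G) (F := S.F) (I := S.I)
    (fun N => continuousOn_integral_mul_of_hasCompactSupport S.smooth_ρ
      (K.contDiff_mul_sq N).continuous (K.hasCompactSupport N).mul_right)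
    (fun N => continuousOn_finsetSum _ fun i _ =>
      continuousOn_integral_mul_of_hasCompactSupport (S.contDiffOn_momentum i)
      (K.contDiff_mul_coord i N).continuous (K.hasCompactSupport N).mul_right)
    (fun N s hs => ?_) (fun N s hs => ?_) (fun N s hs => ?_) (fun N s hs => ?_)
    (fun N s hs => ?_) (fun N s hs => ?_)
    (fun s hs => (S.tendsto_truncated_inertia K hs).1)
    (fun s hs => (S.tendsto_truncated_momentum_weight K hs).1)
    (fun s hs => (S.tendsto_truncated_inertia_deriv K (hsub hs)).1) (fun s hs => ?_)
    (fun s hs => S.I_nonneg hγ hs) (fun s hs => ?_) ht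
  · rw [← S.integral_mul_deriv_density (K.contDiff_mul_sq N) (K.hasCompactSupport N).mul_right hs]
    exact hasDerivAt_integral_mul_of_hasCompactSupport S.smooth_ρ
      (K.contDiff_mul_sq N).continuous (K.hasCompactSupport N).mul_right hs
  · refine HasDerivAt.fun_sum fun i _ => ?_
    rw [← S.integral_mul_deriv_momentum (K.contDiff_mul_coord i N)
      (K.hasCompactSupport N).mul_right hγ hs i]
    exact hasDerivAt_integral_mul_of_hasCompactSupport (S.contDiffOn_momentum i)
      (K.contDiff_mul_coord i N).continuous (K.hasCompactSupport N).mul_right hs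
  · linarith [(S.tendsto_truncated_inertia K (hsub hs)).2 N, hG s (hsub hs)]
  · have h := (S.tendsto_truncated_momentum_weight K (hsub hs)).2 N
    have h' : n * ∫ x, S.ρ s x * ‖S.u s x‖ * ‖x‖ ≤ C₁ := by
      rw [hC₁]; gcongr; exact hW s (hsub hs)
    linarith
  · have h := (S.tendsto_truncated_inertia_deriv K (hsub hs)).2 N
    have h' : (1 + K.C) * ∫ x, S.ρ s x * ‖S.u s x‖ * ‖x‖ ≤ C₂ := by
      rw [hC₂]; gcongr; exact hW s (hsub hs)
    linarith
  · have h := (S.tendsto_truncated_momentum_weight_deriv K hγ (hsub hs)).2 N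
    have h' : n * ((1 + K.C) * (2 * S.Ek s + (γ - 1) * S.I s)) ≤ C₃ := by
      have h1 := hEI s (hsub hs)
      have h2 := S.Ek_nonneg (hsub hs)
      have h3 := S.I_nonneg hγ (hsub hs)
      rw [hC₃]
      gcongr <;> linarith
    linarith
  · convert (S.tendsto_truncated_momentum_weight_deriv K hγ (hsub hs)).1 using 2
    rw [← hEI s (hsub hs)]
    ring
  · have h := S.sq_mul_I_le hs (s + 1)
    rwa [S.IE_eq hγ hs] at h

end IsentropicEulerSolution

lemma tendsto_quadratic_div_sq (a b c : ℝ) :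
    Tendsto (fun t : ℝ => (a + b * t + c * t ^ 2) / (t + 1) ^ 2) atTop (nhds c) := by
  have h1 : Tendsto (fun t : ℝ => (t + 1)⁻¹) atTop (nhds 0) :=
    tendsto_inv_atTop_zero.comp (tendsto_atTop_add_const_right _ _ tendsto_id)
  have h2 := ((h1.const_mul (b - 2 * c)).const_add c).add ((h1.pow 2).const_mul (a - b + c))
  simp only [mul_zero, add_zero, ne_eq, OfNat.ofNat_ne_zero, not_false_eq_true, zero_pow] at h2
  refine h2.congr' ?_
  filter_upwards [eventually_gt_atTop 0] with t ht
  field_simp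
  ring

/-- **Theorem 2.2 (Euler case): blow-up for the isentropic compressible Euler equations.**
Let `1 < γ ≤ 1 + 2/n`. If the initial physical quantities satisfy `M(0) > 0`,
`ℙ(0) ≠ 0`, `IE(0) > 0` and
`IE(0)^{n(γ−1)/2} IJ(0) / M(0)^{((n+2)γ−n)/2}
  < (Γ(n/2+1)/π^{n/2})^{γ−1} / (2^{((n+2)γ−n)/2}(γ−1))`
with `IJ(0) = G(0) − F(0) + IE(0)`, then there is a finite time `T₂* > 0` such that no
classical solution (in the sense of `IsentropicEulerSolution`, which encodes the decay
and integrability conditions) with these initial physical quantities exists on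
`ℝⁿ × [0,T]` for any `T ≥ T₂*`; in particular there is no global-in-time solution. -/
theorem isentropic_euler_blowup
    (n : ℕ) (hn : 1 ≤ n) (γ : ℝ) (hγ : 1 < γ) (hγn : γ ≤ 1 + 2 / n)
    (M₀ : ℝ) (hM₀ : 0 < M₀)
    (P₀ : EuclideanSpace ℝ (Fin n)) (hP₀ : P₀ ≠ 0)
    (F₀ G₀ : ℝ) (IE₀ : ℝ) (hIE₀ : 0 < IE₀)
    (hcond : IE₀ ^ ((n : ℝ) * (γ - 1) / 2) * (G₀ - F₀ + IE₀)
        / M₀ ^ ((((n : ℝ) + 2) * γ - n) / 2)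
      < (Real.Gamma ((n : ℝ) / 2 + 1) / Real.pi ^ ((n : ℝ) / 2)) ^ (γ - 1)
        / ((2 : ℝ) ^ ((((n : ℝ) + 2) * γ - n) / 2) * (γ - 1))) :
    ∃ Tstar : ℝ, 0 < Tstar ∧ ∀ T : ℝ, Tstar ≤ T →
      ¬ ∃ S : IsentropicEulerSolution n γ T,
          S.M 0 = M₀ ∧ S.P 0 = P₀ ∧ S.F 0 = F₀ ∧ S.G 0 = G₀ ∧ S.IE 0 = IE₀ := by
  have hn0 : (0 : ℝ) < n := by exact_mod_cast hn
  have hγ0 : 0 < γ - 1 := by linarith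
  have hk : (n : ℝ) * (γ - 1) / 2 ≤ 1 := by
    have h : γ - 1 ≤ 2 / n := by linarith
    rw [le_div_iff₀ hn0] at h
    linarith
  set k := (n : ℝ) * (γ - 1) / 2 with hk_def
  set p := (((n : ℝ) + 2) * γ - n) / 2 with hp_def
  set A := (Real.Gamma ((n : ℝ) / 2 + 1) / Real.pi ^ ((n : ℝ) / 2)) ^ (γ - 1) with hA_def
  have hMp : 0 < M₀ ^ p := Real.rpow_pos_of_pos hM₀ p
  have h2p : (0 : ℝ) < 2 ^ p := Real.rpow_pos_of_pos two_pos p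
  have hlim : (γ - 1) * ((G₀ - F₀ + IE₀) * IE₀ ^ k) < A / 2 ^ p * M₀ ^ p := by
    rw [div_lt_div_iff₀ hMp (by positivity)] at hcond
    rw [div_mul_eq_mul_div, lt_div_iff₀ h2p]
    linarith
  have hQ := tendsto_quadratic_div_sq G₀ F₀ IE₀
  have hev := (((hQ.rpow_const (p := k) (Or.inl hIE₀.ne')).const_mul (G₀ - F₀ + IE₀)).const_mul
    (γ - 1)).eventually_lt_const hlim
  obtain ⟨t, ⟨hlt, hpos⟩, ht⟩ :=
    ((hev.and (hQ.eventually_const_lt hIE₀)).and (eventually_gt_atTop 0)).exists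
  refine ⟨t, ht, ?_⟩
  rintro T hT ⟨S, hM, -, hF, hG, hE⟩
  have htT : t ∈ Set.Icc 0 T := ⟨ht.le, hT⟩
  obtain ⟨hGt, hIt⟩ := S.G_le_and_I_le hγ hk htT
  rw [hG, hF, hE] at hGt hIt
  have hMt : ∫ x, S.ρ t x = M₀ := (S.M_eq htT).trans hM
  set Q := G₀ + F₀ * t + IE₀ * t ^ 2 with hQ_def
  have ht1 : 0 < t + 1 := by linarith
  have hQ0 : 0 < Q := by
    have := mul_pos hpos (pow_pos ht1 2)
    rwa [div_mul_cancel₀ _ (by positivity)] at this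
  have hmass := mass_rpow_le_pressure_mul_inertia hn hγ hγn (S.ρ_nonneg t htT) (S.int_ρ t htT)
    (S.int_ρx2 t htT) (S.int_ργ t htT) (hMt ▸ hM₀) hQ0 hGt
  rw [hMt, S.integral_pressure_eq hγ] at hmass
  have hQk : Q ^ k = (t + 1) ^ (2 * k) * (Q / (t + 1) ^ 2) ^ k := by
    rw [Real.rpow_mul ht1.le, ← Real.mul_rpow (by positivity) hpos.le, Real.rpow_two,
      mul_div_cancel₀ _ (by positivity)]
  refine lt_irrefl (A / 2 ^ p * M₀ ^ p) (lt_of_le_of_lt ?_ hlt)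
  calc A / 2 ^ p * M₀ ^ p ≤ (γ - 1) * S.I t * Q ^ k := hmass
    _ = (γ - 1) * (S.I t * (t + 1) ^ (2 * k) * (Q / (t + 1) ^ 2) ^ k) := by rw [hQk]; ring
    _ ≤ (γ - 1) * ((G₀ - F₀ + IE₀) * (Q / (t + 1) ^ 2) ^ k) := by gcongr
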